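/- Let $1<\alpha<2$ and $n\geq 2$. There exists a constant $c=c(\alpha,n)>0$ such that for every radius $0<r<\infty$ and every continuous function $u$ with compact support in the open ball $B_r=\{x\in\mathbb{R}^n:|x|<r\}$, the fractional Hardy–Sobolev–Maz'ya inequality holds: $\mathcal{E}_{B_r}(u) \geq 2^{\alpha}\kappa_{n,\alpha}\int_{B_r} u^2(x)\, r^{\alpha}(r^2-|x|^2)^{-\alpha}\,dx + c\left(\int_{B_r}|u(x)|^{2^*}\,dx\right)^{2/2^*}$, where $2^*=2n/(n-\alpha)$. -/

import Mathlib

open MeasureTheory Metric Set Filter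
open scoped ENNReal Topology

/-- The Euler beta function. -/
noncomputable def eulerBeta (a b : ℝ) : ℝ :=
  Real.Gamma a * Real.Gamma b / Real.Gamma (a + b)

/-- The sharp fractional Hardy constant `κ_{n,α}`. -/
noncomputable def kappa (n : ℕ) (α : ℝ) : ℝ :=
  Real.pi ^ (((n : ℝ) - 1) / 2) * (Real.Gamma ((1 + α) / 2) / Real.Gamma ((n + α) / 2)) *
    ((eulerBeta ((1 + α) / 2) ((2 - α) / 2) - 2 ^ α) / (α * 2 ^ α))

/-- The quadratic form `𝓔_D(u)`, valued in `[0,∞]`. -/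
noncomputable def energy (n : ℕ) (α : ℝ) (D : Set (EuclideanSpace ℝ (Fin n)))
    (u : EuclideanSpace ℝ (Fin n) → ℝ) : ℝ≥0∞ :=
  (1 / 2 : ℝ≥0∞) * ∫⁻ x in D, ∫⁻ y in D,
    ENNReal.ofReal ((u x - u y) ^ 2 / ‖x - y‖ ^ ((n : ℝ) + α))

/-!
Write `u = w v` with the ground state `w x = (1 - ‖x‖²) ^ ((α - 1) / 2)` of the unit ball. For a
symmetric kernel `k` and `L w x = ∫ (w x - w y) k(x, y) dy`, the form of `u` splits into the
weighted form `½ ∬ w(x) w(y) (v x - v y)² k(x, y)` and the potential term `∫ (L w / w) u²`. The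
singularity of `k` is cut off at a fixed distance in the Klein model of hyperbolic space: on each
chord through `x` this is a cutoff in a projective coordinate, so that polar coordinates at `x`
reduce `L w` to one-dimensional chord integrals with the same cutoff on every chord. The two halves
of a chord together contribute least when the chord is seen from its end point; this limiting value
is a beta integral, which produces the sharp constant, and the excess over it bounds `∫ v²` from
below.

The critical Lebesgue norm of `u` is controlled by the weighted form of `v` plus `∫ v²`: compare
`v x` with its mean over a ball of radius `ρ / 2` shifted from `x` towards the origin, where `w` is
not much smaller than at `x`, and optimise in `ρ`. Scaling carries the result to every radius.
-/

section ChordIntegral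

/-- The Hardy integrand on a half chord of the ball, in the parameter `s` in which the chord is
`(-1, 1)`, its Klein-model distance to the base point is `artanh s` and `t` measures how far the
base point is from the midpoint of the chord. -/
noncomputable def halfChordIntegrand (α t s : ℝ) : ℝ :=
  ((1 + t * s) ^ (α - 1) - (1 - s ^ 2) ^ ((α - 1) / 2)) * s ^ (-1 - α)

/-- The Hardy integral of a half chord, truncated at distance `ε`. -/
noncomputable def halfChordIntegral (α ε t : ℝ) : ℝ :=
  ∫ s in ε..1, halfChordIntegrand α t s

/-- The Hardy integral of a whole chord, truncated at distance `ε`. -/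
noncomputable def chordIntegral (α ε t : ℝ) : ℝ :=
  halfChordIntegral α ε t + halfChordIntegral α ε (-t)

variable {α ε t s : ℝ}

theorem continuousOn_halfChordIntegrand (hα : 1 < α) (hε : 0 < ε) :
    ContinuousOn (halfChordIntegrand α t) (Icc ε 1) := by
  refine ContinuousOn.mul (ContinuousOn.sub ?_ ?_) ?_
  · exact ContinuousOn.rpow_const (by fun_prop) fun s _ => Or.inr (by linarith)
  · exact ContinuousOn.rpow_const (by fun_prop) fun s _ => Or.inr (by linarith)
  · exact continuousOn_id.rpow_const fun s hs => Or.inl (hε.trans_le hs.1).ne'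

theorem intervalIntegrable_halfChordIntegrand (hα : 1 < α) (hε : 0 < ε) (hε1 : ε ≤ 1) :
    IntervalIntegrable (halfChordIntegrand α t) volume ε 1 :=
  (continuousOn_halfChordIntegrand hα hε).intervalIntegrable_of_Icc hε1

theorem intervalIntegrable_chordIntegrand (hα : 1 < α) (hε : 0 < ε) (hε1 : ε ≤ 1) :
    IntervalIntegrable (fun s => halfChordIntegrand α t s + halfChordIntegrand α (-t) s)
      volume ε 1 :=
  (intervalIntegrable_halfChordIntegrand hα hε hε1).add
    (intervalIntegrable_halfChordIntegrand hα hε hε1)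

theorem chordIntegral_eq_integral (hα : 1 < α) (hε : 0 < ε) (hε1 : ε ≤ 1) :
    chordIntegral α ε t =
      ∫ s in ε..1, (halfChordIntegrand α t s + halfChordIntegrand α (-t) s) :=
  (intervalIntegral.integral_add (intervalIntegrable_halfChordIntegrand hα hε hε1)
    (intervalIntegrable_halfChordIntegrand hα hε hε1)).symm

theorem chordIntegral_one_nonneg (hα : 1 < α) (hε : 0 < ε) (hε1 : ε ≤ 1) :
    0 ≤ chordIntegral α ε 1 := by
  rw [chordIntegral_eq_integral hα hε hε1]
  refine intervalIntegral.integral_nonneg hε1 fun s hs => ?_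
  have hminus : 0 ≤ 1 - s := sub_nonneg.2 hs.2
  have hplus : 0 ≤ 1 + s := by linarith [hs.1]
  have hsq : ∀ y : ℝ, 0 ≤ y → y ^ (α - 1) = (y ^ ((α - 1) / 2)) ^ 2 := fun y hy => by
    rw [← Real.rpow_two, ← Real.rpow_mul hy]; congr 1; ring
  have hprod : (1 - s ^ 2) ^ ((α - 1) / 2) =
      (1 + s) ^ ((α - 1) / 2) * (1 - s) ^ ((α - 1) / 2) := by
    rw [← Real.mul_rpow hplus hminus]; ring_nf
  simp only [halfChordIntegrand, one_mul, neg_one_mul, ← sub_eq_add_neg]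
  rw [← add_mul, hprod, hsq _ hplus, hsq _ hminus]
  refine mul_nonneg ?_ (Real.rpow_nonneg (hε.le.trans hs.1) _)
  nlinarith [sq_nonneg ((1 + s) ^ ((α - 1) / 2) - (1 - s) ^ ((α - 1) / 2))]

theorem one_add_mul_le_one_sub_rpow {β y : ℝ} (hβ0 : 0 ≤ β) (hβ1 : β ≤ 1) (hy0 : 0 ≤ y)
    (hy1 : y < 1) : 1 + (1 - β) * y ≤ (1 - y) ^ (β - 1) := by
  have bernoulli : (1 - y) ^ (1 - β) ≤ 1 - (1 - β) * y := by
    simpa [← sub_eq_add_neg] using rpow_one_add_le_one_add_mul_self (s := -y) (p := 1 - β)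
      (by linarith) (by linarith) (by linarith)
  have hpos : 0 < 1 + (1 - β) * y := by nlinarith
  rw [← neg_sub 1 β, Real.rpow_neg (by linarith), le_inv_comm₀ hpos
    (Real.rpow_pos_of_pos (by linarith) _)]
  refine bernoulli.trans ?_
  rw [← one_div, le_div_iff₀ hpos]
  nlinarith [sq_nonneg ((1 - β) * y)]

theorem antitoneOn_rpow_one_add_add_rpow_one_sub {β : ℝ} (hβ0 : 0 ≤ β) (hβ1 : β ≤ 1) :
    AntitoneOn (fun y : ℝ => (1 + y) ^ β + (1 - y) ^ β + β * (1 - β) / 2 * y ^ 2)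
      (Icc 0 1) := by
  have hderiv : ∀ y ∈ Ioo (0 : ℝ) 1, HasDerivAt
      (fun y : ℝ => (1 + y) ^ β + (1 - y) ^ β + β * (1 - β) / 2 * y ^ 2)
      (1 * β * (1 + y) ^ (β - 1) + (-1) * β * (1 - y) ^ (β - 1) +
        β * (1 - β) / 2 * (2 * y)) y := by
    intro y hy
    have hplus : (1 + id y) ≠ 0 := (add_pos one_pos hy.1).ne'
    have hminus : (1 - id y) ≠ 0 := (sub_pos.2 hy.2).ne'
    exact ((((hasDerivAt_id y).const_add 1).rpow_const (Or.inl hplus)).add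
      (((hasDerivAt_id y).const_sub 1).rpow_const (Or.inl hminus))).add
      (by simpa using (hasDerivAt_pow 2 y).const_mul (β * (1 - β) / 2))
  have hcont : Continuous
      (fun y : ℝ => (1 + y) ^ β + (1 - y) ^ β + β * (1 - β) / 2 * y ^ 2) := by
    fun_prop (disch := exact hβ0)
  refine antitoneOn_of_deriv_nonpos (convex_Icc 0 1) hcont.continuousOn ?_ ?_ <;>
    rw [interior_Icc]
  · exact fun y hy => (hderiv y hy).differentiableAt.differentiableWithinAt
  · intro y hy
    rw [(hderiv y hy).deriv]
    have hplus : (1 + y) ^ (β - 1) ≤ 1 :=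
      Real.rpow_le_one_of_one_le_of_nonpos (by linarith [hy.1]) (by linarith)
    have hminus := one_add_mul_le_one_sub_rpow hβ0 hβ1 hy.1.le hy.2
    nlinarith [hy.1]

theorem rpow_one_add_add_rpow_one_sub_le {β : ℝ} (hβ0 : 0 ≤ β) (hβ1 : β ≤ 1) (hs0 : 0 ≤ s)
    (hs1 : s ≤ 1) (ht : |t| ≤ 1) :
    (1 + s) ^ β + (1 - s) ^ β + β * (1 - β) / 2 * ((1 - t ^ 2) * s ^ 2) ≤
      (1 + t * s) ^ β + (1 - t * s) ^ β := by
  have hanti := antitoneOn_rpow_one_add_add_rpow_one_sub hβ0 hβ1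
    (a := |t| * s) (b := s) ⟨by positivity, by nlinarith⟩ ⟨hs0, hs1⟩ (by nlinarith)
  have heven : (1 + |t| * s) ^ β + (1 - |t| * s) ^ β = (1 + t * s) ^ β + (1 - t * s) ^ β := by
    rcases abs_choice t with h | h <;> rw [h]
    rw [neg_mul, ← sub_eq_add_neg, sub_neg_eq_add, add_comm]
  simp only [mul_pow, sq_abs, heven] at hanti
  linarith

theorem halfChordIntegrand_add_le (hα1 : 1 < α) (hα2 : α < 2) (hs0 : 0 < s) (hs1 : s ≤ 1)
    (ht : |t| ≤ 1) :
    halfChordIntegrand α 1 s + halfChordIntegrand α (-1) s +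
      (α - 1) * (2 - α) / 2 * (1 - t ^ 2) ≤
      halfChordIntegrand α t s + halfChordIntegrand α (-t) s := by
  have hnum := rpow_one_add_add_rpow_one_sub_le (β := α - 1) (by linarith) (by linarith)
    hs0.le hs1 ht
  have hpos : 0 < s ^ (-1 - α) := Real.rpow_pos_of_pos hs0 _
  have hweight : 1 ≤ s ^ 2 * s ^ (-1 - α) := by
    rw [← Real.rpow_two, ← Real.rpow_add hs0]
    exact Real.one_le_rpow_of_pos_of_le_one_of_nonpos hs0 hs1 (by linarith)
  have hC : 0 ≤ (α - 1) * (2 - α) / 2 * (1 - t ^ 2) := by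
    have := (sq_le_one_iff_abs_le_one t).2 ht
    exact mul_nonneg (by nlinarith) (by linarith)
  have hmul := mul_le_mul_of_nonneg_right hnum hpos.le
  have hC' := mul_le_mul_of_nonneg_left hweight hC
  simp only [halfChordIntegrand, one_mul, neg_mul, ← sub_eq_add_neg]
  ring_nf at hmul hC' ⊢
  linarith

theorem chordIntegral_one_add_le (hα1 : 1 < α) (hα2 : α < 2) (hε : 0 < ε) (hε2 : ε ≤ 1 / 2)
    (ht : |t| ≤ 1) :
    chordIntegral α ε 1 + (α - 1) * (2 - α) / 4 * (1 - t ^ 2) ≤ chordIntegral α ε t := by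
  have hε1 : ε ≤ 1 := by linarith
  set C := (α - 1) * (2 - α) / 2 * (1 - t ^ 2) with hC_def
  have hC : 0 ≤ C := by
    have := (sq_le_one_iff_abs_le_one t).2 ht
    exact mul_nonneg (by nlinarith) (by linarith)
  rw [chordIntegral_eq_integral hα1 hε hε1, chordIntegral_eq_integral hα1 hε hε1]
  calc (∫ s in ε..1, (halfChordIntegrand α 1 s + halfChordIntegrand α (-1) s)) +
        (α - 1) * (2 - α) / 4 * (1 - t ^ 2)
      = (∫ s in ε..1, (halfChordIntegrand α 1 s + halfChordIntegrand α (-1) s)) + C / 2 := by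
        rw [hC_def]; ring
    _ ≤ (∫ s in ε..1, (halfChordIntegrand α 1 s + halfChordIntegrand α (-1) s)) +
        ∫ _ in ε..1, C := by
        rw [intervalIntegral.integral_const, smul_eq_mul]; nlinarith
    _ = ∫ s in ε..1, (halfChordIntegrand α 1 s + halfChordIntegrand α (-1) s + C) :=
        (intervalIntegral.integral_add (intervalIntegrable_chordIntegrand hα1 hε hε1)
          intervalIntegrable_const).symm
    _ ≤ ∫ s in ε..1, (halfChordIntegrand α t s + halfChordIntegrand α (-t) s) :=
        intervalIntegral.integral_mono_on hε1
          ((intervalIntegrable_chordIntegrand hα1 hε hε1).add intervalIntegrable_const)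
          (intervalIntegrable_chordIntegrand hα1 hε hε1)
          fun s hs => halfChordIntegrand_add_le hα1 hα2 (hε.trans_le hs.1) hs.2 ht

end ChordIntegral

section BetaIntegral

theorem integral_rpow_mul_one_sub_rpow {a b : ℝ} (ha : 0 < a) (hb : 0 < b) :
    ∫ x in Ioo (0 : ℝ) 1, x ^ (a - 1) * (1 - x) ^ (b - 1) = eulerBeta a b := by
  have hbeta := Complex.betaIntegral_eq_Gamma_mul_div a b (by simpa) (by simpa)
  rw [Complex.betaIntegral, intervalIntegral.integral_of_le zero_le_one,
    integral_Ioc_eq_integral_Ioo] at hbeta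
  have hcongr : EqOn (fun x : ℝ => ((x : ℂ) ^ ((a : ℂ) - 1) * (1 - (x : ℂ)) ^ ((b : ℂ) - 1)))
      (fun x : ℝ => ((x ^ (a - 1) * (1 - x) ^ (b - 1) : ℝ) : ℂ)) (Ioo 0 1) := by
    intro x hx
    simp [Complex.ofReal_cpow hx.1.le, Complex.ofReal_cpow (sub_nonneg.2 hx.2.le)]
  rw [setIntegral_congr_fun measurableSet_Ioo hcongr, integral_complex_ofReal,
    ← Complex.ofReal_add, Complex.Gamma_ofReal, Complex.Gamma_ofReal,
    Complex.Gamma_ofReal] at hbeta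
  exact_mod_cast hbeta

theorem integral_rpow_mul_one_sub_sq_rpow {a b : ℝ} (ha : 0 < a) (hb : 0 < b) :
    ∫ s in Ioo (0 : ℝ) 1, s ^ (2 * a - 1) * (1 - s ^ 2) ^ (b - 1) = eulerBeta a b / 2 := by
  have hsubst := integral_comp_rpow_Ioi_of_pos (p := 2) (by norm_num)
    (g := (Iio (1 : ℝ)).indicator fun x => x ^ (a - 1) * (1 - x) ^ (b - 1))
  rw [setIntegral_indicator measurableSet_Iio, Ioi_inter_Iio,
    integral_rpow_mul_one_sub_rpow ha hb] at hsubst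
  rw [← hsubst, ← Ioi_inter_Iio, ← setIntegral_indicator measurableSet_Iio,
    eq_div_iff two_ne_zero, ← integral_mul_const]
  refine setIntegral_congr_fun measurableSet_Ioi fun s (hs : 0 < s) => ?_
  have hlt : s ^ (2 : ℝ) < 1 ↔ s < 1 := by
    rw [Real.rpow_two, sq_lt_one_iff₀ hs.le]
  by_cases hs1 : s < 1
  · have hpow : s ^ (2 * a - 1) = s ^ (2 * (a - 1)) * s := by
      rw [← Real.rpow_add_one hs.ne']; congr 1; ring
    rw [indicator_of_mem (mem_Iio.2 hs1), indicator_of_mem (mem_Iio.2 (hlt.2 hs1)), hpow,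
      Real.rpow_mul hs.le]
    simp only [show (2 : ℝ) - 1 = 1 by norm_num, Real.rpow_one, Real.rpow_two, smul_eq_mul]
    ring
  · rw [indicator_of_notMem (by simpa using hs1),
      indicator_of_notMem (mem_Iio.not.2 (mt hlt.1 hs1)), smul_zero, zero_mul]

variable {α : ℝ}

theorem two_mul_integral_rpow_mul_one_sub_sq_rpow (hα1 : 1 < α) (hα2 : α < 2) :
    2 * (α - 1) * ∫ s in Ioo (0 : ℝ) 1, s ^ (1 - α) * (1 - s ^ 2) ^ ((α - 1) / 2 - 1) =
      eulerBeta ((1 + α) / 2) ((2 - α) / 2) := by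
  have hbeta := integral_rpow_mul_one_sub_sq_rpow (a := (2 - α) / 2) (b := (α - 1) / 2)
    (by linarith) (by linarith)
  rw [show 2 * ((2 - α) / 2) - 1 = 1 - α by ring] at hbeta
  have hΓ : Real.Gamma ((1 + α) / 2) = (α - 1) / 2 * Real.Gamma ((α - 1) / 2) := by
    rw [← Real.Gamma_add_one (by linarith)]; congr 1; ring
  have hΓ' : Real.Gamma ((1 + α) / 2 + (2 - α) / 2) = 1 / 2 * Real.Gamma (1 / 2) := by
    rw [← Real.Gamma_add_one (by norm_num)]; congr 1; ring
  rw [hbeta, eulerBeta, eulerBeta, hΓ, hΓ', show (2 - α) / 2 + (α - 1) / 2 = 1 / 2 by ring]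
  ring

theorem integrableOn_rpow_mul_one_sub_sq_rpow (hα1 : 1 < α) (hα2 : α < 2) :
    IntegrableOn (fun s : ℝ => s ^ (1 - α) * (1 - s ^ 2) ^ ((α - 1) / 2 - 1)) (Ioo 0 1) := by
  by_contra hnot
  have hbeta := two_mul_integral_rpow_mul_one_sub_sq_rpow hα1 hα2
  rw [integral_undef hnot, mul_zero, eulerBeta] at hbeta
  have hpos : ∀ x : ℝ, 0 < x → 0 < Real.Gamma x := fun x => Real.Gamma_pos_of_pos
  have : 0 < Real.Gamma ((1 + α) / 2) * Real.Gamma ((2 - α) / 2) /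
      Real.Gamma ((1 + α) / 2 + (2 - α) / 2) := by
    have := hpos ((1 + α) / 2) (by linarith)
    have := hpos ((2 - α) / 2) (by linarith)
    have := hpos ((1 + α) / 2 + (2 - α) / 2) (by linarith)
    positivity
  linarith

theorem intervalIntegrable_rpow_mul_one_sub_sq_rpow (hα1 : 1 < α) (hα2 : α < 2) :
    IntervalIntegrable (fun s : ℝ => s ^ (1 - α) * (1 - s ^ 2) ^ ((α - 1) / 2 - 1))
      volume 0 1 :=
  (intervalIntegrable_iff_integrableOn_Ioo_of_le zero_le_one).2
    (integrableOn_rpow_mul_one_sub_sq_rpow hα1 hα2)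

end BetaIntegral

section SharpConstant

/-- A primitive of the Hardy integrand of a chord seen from its end point, up to the integrand
`2 (α - 1) / α * s ^ (1 - α) * (1 - s ^ 2) ^ ((α - 1) / 2 - 1)` of a beta integral; it comes from
integrating `s ^ (-1 - α)` by parts. -/
noncomputable def endpointPrimitive (α s : ℝ) : ℝ :=
  (2 * (s ^ (-α) * (1 - s ^ 2) ^ ((α - 1) / 2)) - ((1 + s⁻¹) ^ α + (s⁻¹ - 1) ^ α)) / α

variable {α ε s : ℝ}

theorem continuousOn_endpointPrimitive (hα : 1 < α) (hε : 0 < ε) :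
    ContinuousOn (endpointPrimitive α) (Icc ε 1) := by
  have hne : ∀ s ∈ Icc ε 1, s ≠ 0 := fun s hs => (hε.trans_le hs.1).ne'
  have hinv : ContinuousOn (fun s : ℝ => s⁻¹) (Icc ε 1) := continuousOn_inv₀.mono hne
  refine ((continuousOn_const.mul (ContinuousOn.mul ?_ ?_)).sub
    (ContinuousOn.add ?_ ?_)).div_const α
  · exact continuousOn_id.rpow_const fun s hs => Or.inl (hne s hs)
  · exact ContinuousOn.rpow_const (by fun_prop) fun s _ => Or.inr (by linarith)
  · exact (continuousOn_const.add hinv).rpow_const fun s _ => Or.inr (by linarith)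
  · exact (hinv.sub continuousOn_const).rpow_const fun s _ => Or.inr (by linarith)

theorem rpow_mul_inv_sub_one {x : ℝ} (hx : 0 ≤ x) (hs : 0 < s) :
    (x * s⁻¹) ^ (α - 1) = x ^ (α - 1) * s ^ (-1 - α) * s ^ 2 := by
  rw [Real.mul_rpow hx (inv_nonneg.2 hs.le), Real.inv_rpow hs.le, ← Real.rpow_neg hs.le,
    mul_assoc, ← Real.rpow_two, ← Real.rpow_add hs]
  congr 2
  ring

theorem hasDerivAt_endpointPrimitive (hα : 1 < α) (hs0 : 0 < s) (hs1 : s < 1) :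
    HasDerivAt (endpointPrimitive α)
      (halfChordIntegrand α 1 s + halfChordIntegrand α (-1) s -
        2 * (α - 1) / α * (s ^ (1 - α) * (1 - s ^ 2) ^ ((α - 1) / 2 - 1))) s := by
  have hinv : 1 < s⁻¹ := (one_lt_inv₀ hs0).2 hs1
  have hsq : 0 < 1 - s ^ 2 := by nlinarith
  have dinv : HasDerivAt (fun s : ℝ => s⁻¹) (-(s ^ 2)⁻¹) s := hasDerivAt_inv hs0.ne'
  have dplus := (dinv.const_add 1).rpow_const (p := α) (Or.inl (by positivity))
  have dminus := (dinv.sub_const 1).rpow_const (p := α) (Or.inl (by linarith))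
  have dpow := (hasDerivAt_id s).rpow_const (p := -α) (Or.inl hs0.ne')
  have dbeta := ((hasDerivAt_pow 2 s).const_sub 1).rpow_const (p := (α - 1) / 2)
    (Or.inl hsq.ne')
  refine ((((dpow.mul dbeta).const_mul 2).sub (dplus.add dminus)).div_const α).congr_deriv ?_
  have eplus : (1 + s⁻¹) ^ (α - 1) = (1 + s) ^ (α - 1) * s ^ (-1 - α) * s ^ 2 := by
    rw [← rpow_mul_inv_sub_one (by positivity) hs0, add_mul, mul_inv_cancel₀ hs0.ne', one_mul,
      add_comm]
  have eminus : (s⁻¹ - 1) ^ (α - 1) = (1 - s) ^ (α - 1) * s ^ (-1 - α) * s ^ 2 := by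
    rw [← rpow_mul_inv_sub_one (by linarith) hs0, sub_mul, mul_inv_cancel₀ hs0.ne', one_mul]
  have epow : s ^ (-α - 1) = s ^ (-1 - α) := by congr 1; ring
  have epow' : s ^ (-α) = s ^ (-1 - α) * s := by
    rw [← Real.rpow_add_one hs0.ne']; congr 1; ring
  have epow'' : s ^ (1 - α) = s ^ (-1 - α) * s * s := by
    rw [← Real.rpow_add_one hs0.ne', ← Real.rpow_add_one hs0.ne']; congr 1; ring
  have hα0 : α ≠ 0 := by linarith
  simp only [id, halfChordIntegrand, one_mul, neg_mul, ← sub_eq_add_neg]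
  rw [eplus, eminus, epow, epow', epow'']
  field_simp
  ring

theorem endpointPrimitive_one (hα : 1 < α) : endpointPrimitive α 1 = -2 ^ α / α := by
  rw [endpointPrimitive]
  norm_num [Real.zero_rpow (by linarith : α ≠ 0), Real.zero_rpow (by linarith : (α - 1) / 2 ≠ 0)]

theorem endpointPrimitive_nonpos (hα : 1 < α) (hs0 : 0 < s) (hs1 : s ≤ 1) :
    endpointPrimitive α s ≤ 0 := by
  have hinv : 1 ≤ s⁻¹ := (one_le_inv₀ hs0).2 hs1
  have hplus : 1 + s⁻¹ ∈ Ici (0 : ℝ) := by rw [mem_Ici]; positivity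
  have hminus : s⁻¹ - 1 ∈ Ici (0 : ℝ) := by rw [mem_Ici]; linarith
  have hconv := (convexOn_rpow hα.le).2 hplus hminus (by norm_num : (0 : ℝ) ≤ 1 / 2)
    (by norm_num : (0 : ℝ) ≤ 1 / 2) (by norm_num)
  simp only [smul_eq_mul] at hconv
  rw [show 1 / 2 * (1 + s⁻¹) + 1 / 2 * (s⁻¹ - 1) = s⁻¹ by ring,
    Real.inv_rpow hs0.le, ← Real.rpow_neg hs0.le] at hconv
  have hle : (1 - s ^ 2) ^ ((α - 1) / 2) ≤ 1 :=
    Real.rpow_le_one (by nlinarith) (by nlinarith) (by linarith)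
  have hmul := mul_le_of_le_one_right (Real.rpow_nonneg hs0.le (-α)) hle
  exact div_nonpos_of_nonpos_of_nonneg (by linarith) (by linarith)

theorem le_chordIntegral_one (hα1 : 1 < α) (hα2 : α < 2) (hε : 0 < ε) (hε1 : ε ≤ 1) :
    (2 * (α - 1) * (∫ s in ε..1, s ^ (1 - α) * (1 - s ^ 2) ^ ((α - 1) / 2 - 1)) - 2 ^ α) / α ≤
      chordIntegral α ε 1 := by
  have hbeta : IntervalIntegrable
      (fun s : ℝ => s ^ (1 - α) * (1 - s ^ 2) ^ ((α - 1) / 2 - 1)) volume ε 1 :=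
    (intervalIntegrable_rpow_mul_one_sub_sq_rpow hα1 hα2).mono_set
      (uIcc_subset_uIcc (by simp [uIcc_of_le, hε.le, hε1]) right_mem_uIcc)
  have hchord := intervalIntegrable_chordIntegrand (t := 1) hα1 hε hε1
  have hftc := intervalIntegral.integral_eq_sub_of_hasDerivAt_of_le hε1
    (continuousOn_endpointPrimitive hα1 hε)
    (fun s hs => hasDerivAt_endpointPrimitive hα1 (hε.trans hs.1) hs.2)
    (hchord.sub (hbeta.const_mul _))
  rw [intervalIntegral.integral_sub hchord (hbeta.const_mul _),
    intervalIntegral.integral_const_mul, ← chordIntegral_eq_integral hα1 hε hε1,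
    endpointPrimitive_one hα1] at hftc
  have hnonpos := endpointPrimitive_nonpos hα1 hε hε1
  rw [sub_div, mul_div_right_comm]
  linarith [neg_div α ((2 : ℝ) ^ α)]

theorem tendsto_chordIntegral_lowerBound (hα1 : 1 < α) (hα2 : α < 2) :
    Tendsto (fun ε : ℝ =>
      (2 * (α - 1) * (∫ s in ε..1, s ^ (1 - α) * (1 - s ^ 2) ^ ((α - 1) / 2 - 1)) - 2 ^ α) / α)
      (𝓝[>] 0) (𝓝 ((eulerBeta ((1 + α) / 2) ((2 - α) / 2) - 2 ^ α) / α)) := by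
  have hcont := intervalIntegral.continuousOn_primitive_interval_left (μ := volume)
    ((intervalIntegrable_iff' (by simp)).1
      (intervalIntegrable_rpow_mul_one_sub_sq_rpow hα1 hα2))
  have hlim := (hcont 0 left_mem_uIcc).mono_left
    (nhdsWithin_le_of_mem (by
      rw [uIcc_of_le zero_le_one]; exact Icc_mem_nhdsGT zero_lt_one) : 𝓝[>] (0 : ℝ) ≤ _)
  rw [← two_mul_integral_rpow_mul_one_sub_sq_rpow hα1 hα2, ← integral_Ioc_eq_integral_Ioo,
    ← intervalIntegral.integral_of_le zero_le_one]
  exact ((hlim.const_mul _).sub_const _).div_const _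

end SharpConstant

section Polar

theorem integral_volumeIoiPow {F : Type*} [NormedAddCommGroup F] [NormedSpace ℝ F] (k : ℕ)
    (f : ℝ → F) :
    ∫ τ : Ioi (0 : ℝ), f τ ∂(Measure.volumeIoiPow k) = ∫ τ in Ioi (0 : ℝ), τ ^ k • f τ := by
  simp only [Measure.volumeIoiPow, ENNReal.ofReal]
  rw [integral_withDensity_eq_integral_smul,
    integral_subtype_comap measurableSet_Ioi fun a ↦ Real.toNNReal (a ^ k) • f a,
    setIntegral_congr_fun measurableSet_Ioi fun x hx ↦ ?_]
  · rw [NNReal.smul_def, Real.coe_toNNReal _ (pow_nonneg hx.out.le _)]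
  · exact (measurable_subtype_coe.pow_const _).real_toNNReal

variable {E F : Type*} [NormedAddCommGroup E] [NormedSpace ℝ E]

theorem homeomorphUnitSphereProd_snd_smul_fst (x : ({0}ᶜ : Set E)) :
    ((homeomorphUnitSphereProd E x).2 : ℝ) • ((homeomorphUnitSphereProd E x).1 : E) = x := by
  simp [smul_smul, norm_ne_zero_iff.2 x.2]

variable [MeasurableSpace E] [FiniteDimensional ℝ E] [BorelSpace E] {μ : Measure E}
  [μ.IsAddHaarMeasure] [NormedAddCommGroup F] {f : E → F}

theorem integrable_smul_sphere_prod (hf : Integrable f μ) :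
    Integrable (fun p : sphere (0 : E) 1 × Ioi (0 : ℝ) => f ((p.2 : ℝ) • (p.1 : E)))
      (μ.toSphere.prod (.volumeIoiPow (Module.finrank ℝ E - 1))) := by
  have hf' : IntegrableOn f ({0}ᶜ : Set E) μ := hf.integrableOn
  rw [integrableOn_iff_comap_subtypeVal (measurableSet_singleton _).compl] at hf'
  rw [← μ.measurePreserving_homeomorphUnitSphereProd.integrable_comp_emb
    (Homeomorph.measurableEmbedding _)]
  exact hf'.congr (.of_forall fun x => congrArg f (homeomorphUnitSphereProd_snd_smul_fst x).symm)

variable [NormedSpace ℝ F]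

theorem integrable_radial_integral (hf : Integrable f μ) :
    Integrable (fun θ : sphere (0 : E) 1 =>
      ∫ τ in Ioi (0 : ℝ), τ ^ (Module.finrank ℝ E - 1) • f (τ • (θ : E))) μ.toSphere :=
  (integrable_smul_sphere_prod hf).integral_prod_left.congr
    (.of_forall fun θ => integral_volumeIoiPow _ fun τ => f (τ • (θ : E)))

theorem integral_eq_integral_sphere_radial [Nontrivial E] (hf : Integrable f μ) :
    ∫ x, f x ∂μ = ∫ θ : sphere (0 : E) 1,
      (∫ τ in Ioi (0 : ℝ), τ ^ (Module.finrank ℝ E - 1) • f (τ • (θ : E))) ∂μ.toSphere := by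
  calc ∫ x, f x ∂μ = ∫ x : ({0}ᶜ : Set E), f x ∂(μ.comap (↑)) := by
        rw [integral_subtype_comap (measurableSet_singleton _).compl f, restrict_compl_singleton]
    _ = ∫ p : sphere (0 : E) 1 × Ioi (0 : ℝ), f ((p.2 : ℝ) • (p.1 : E))
          ∂μ.toSphere.prod (.volumeIoiPow (Module.finrank ℝ E - 1)) := by
        rw [← μ.measurePreserving_homeomorphUnitSphereProd.integral_comp
          (Homeomorph.measurableEmbedding _)]
        exact integral_congr_ae
          (.of_forall fun x => congrArg f (homeomorphUnitSphereProd_snd_smul_fst x).symm)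
    _ = _ := by
        rw [integral_prod _ (integrable_smul_sphere_prod hf)]
        exact integral_congr_ae
          (.of_forall fun θ => integral_volumeIoiPow _ fun τ => f (τ • (θ : E)))

end Polar

section SphereMoment

/-- Half of the moment `∫ |⟪e, θ⟫| ^ α dθ` of a unit vector `e` over the unit sphere of a space of
dimension `n`, by `integral_sphere_abs_inner_rpow`. -/
noncomputable def halfSphereMoment (n : ℕ) (α : ℝ) : ℝ :=
  Real.pi ^ (((n : ℝ) - 1) / 2) * (Real.Gamma ((1 + α) / 2) / Real.Gamma ((n + α) / 2))

theorem halfSphereMoment_nonneg {n : ℕ} {α : ℝ} (hα : 0 ≤ α) : 0 ≤ halfSphereMoment n α := by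
  have hΓ : ∀ x : ℝ, 0 ≤ x → 0 ≤ Real.Gamma x := fun x => Real.Gamma_nonneg_of_nonneg
  exact mul_nonneg (Real.rpow_nonneg Real.pi_pos.le _)
    (div_nonneg (hΓ _ (by positivity)) (hΓ _ (by positivity)))

theorem integral_abs_rpow_mul_exp_neg_sq {α : ℝ} (hα : -1 < α) :
    ∫ t : ℝ, |t| ^ α * Real.exp (-t ^ 2) = Real.Gamma ((1 + α) / 2) := by
  have habs := integral_comp_abs (f := fun t : ℝ => t ^ α * Real.exp (-t ^ (2 : ℝ)))
  rw [integral_rpow_mul_exp_neg_rpow (by norm_num) hα] at habs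
  simp only [Real.rpow_two, sq_abs] at habs
  rw [habs, add_comm α 1]
  ring

/-- The factors of the Gaussian weight `|x 0| ^ α * exp (-‖x‖ ^ 2)` in Euclidean coordinates. -/
noncomputable def gaussianMomentFactor (α : ℝ) {n : ℕ} (i : Fin (n + 1)) (t : ℝ) : ℝ :=
  (if i = 0 then |t| ^ α else 1) * Real.exp (-t ^ 2)

theorem integral_prod_gaussianMomentFactor {α : ℝ} (hα : -1 < α) (n : ℕ) :
    ∫ x : Fin (n + 1) → ℝ, ∏ i, gaussianMomentFactor α i (x i) =
      Real.Gamma ((1 + α) / 2) * Real.pi ^ ((n : ℝ) / 2) := by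
  have hzero : ∫ t, gaussianMomentFactor α (0 : Fin (n + 1)) t = Real.Gamma ((1 + α) / 2) := by
    simpa [gaussianMomentFactor] using integral_abs_rpow_mul_exp_neg_sq hα
  have hsucc (i : Fin n) : ∫ t, gaussianMomentFactor α i.succ t = √Real.pi := by
    simpa [gaussianMomentFactor, Fin.succ_ne_zero] using integral_gaussian 1
  rw [integral_fintype_prod_volume_eq_prod, Fin.prod_univ_succ, hzero]
  simp only [hsucc, Finset.prod_const, Finset.card_univ, Fintype.card_fin]
  rw [Real.sqrt_eq_rpow, ← Real.rpow_mul_natCast Real.pi_pos.le]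
  congr 2
  ring

theorem prod_gaussianMomentFactor (α : ℝ) {n : ℕ} (x : EuclideanSpace ℝ (Fin (n + 1))) :
    ∏ i, gaussianMomentFactor α i (x i) = |x 0| ^ α * Real.exp (-‖x‖ ^ 2) := by
  simp only [gaussianMomentFactor, Finset.prod_mul_distrib, ← Real.exp_sum,
    EuclideanSpace.norm_sq_eq, Finset.sum_neg_distrib, Real.norm_eq_abs, sq_abs]
  rw [Finset.prod_ite_eq' Finset.univ (0 : Fin (n + 1)) fun i => |x i| ^ α]
  simp

theorem integral_abs_apply_zero_rpow_mul_exp {α : ℝ} (hα : -1 < α) (n : ℕ) :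
    ∫ x : EuclideanSpace ℝ (Fin (n + 1)), |x 0| ^ α * Real.exp (-‖x‖ ^ 2) =
      Real.Gamma ((1 + α) / 2) * Real.pi ^ ((n : ℝ) / 2) := by
  simp only [← prod_gaussianMomentFactor]
  rw [(PiLp.volume_preserving_ofLp (Fin (n + 1))).integral_comp
    (MeasurableEquiv.toLp 2 (Fin (n + 1) → ℝ)).symm.measurableEmbedding
    fun x => ∏ i, gaussianMomentFactor α i (x i), integral_prod_gaussianMomentFactor hα]

variable {E : Type*} [NormedAddCommGroup E] [InnerProductSpace ℝ E]

theorem integral_radial_abs_inner_rpow_mul_exp {α : ℝ} (hα : -1 < α) (e : E)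
    (hE : 0 < Module.finrank ℝ E) (θ : sphere (0 : E) 1) :
    ∫ τ in Ioi (0 : ℝ), τ ^ (Module.finrank ℝ E - 1) •
        (|inner ℝ e (τ • (θ : E))| ^ α * Real.exp (-‖τ • (θ : E)‖ ^ 2)) =
      |inner ℝ e (θ : E)| ^ α * (Real.Gamma ((Module.finrank ℝ E + α) / 2) / 2) := by
  obtain ⟨n, hn⟩ := Nat.exists_eq_add_one.2 hE
  have hΓ := integral_rpow_mul_exp_neg_rpow (p := 2) (q := n + α) (by norm_num)
    (by linarith [(Nat.cast_nonneg n : (0 : ℝ) ≤ n)])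
  rw [hn, Nat.add_sub_cancel, show (((n + 1 : ℕ) : ℝ) + α) / 2 = (n + α + 1) / 2 by
    push_cast; ring, ← one_div_mul_eq_div, ← hΓ, ← integral_const_mul]
  refine setIntegral_congr_fun measurableSet_Ioi fun τ (hτ : 0 < τ) => ?_
  simp only [inner_smul_right, norm_smul, norm_eq_of_mem_sphere, mul_one, Real.norm_eq_abs,
    Real.rpow_two, abs_mul, abs_of_pos hτ, smul_eq_mul]
  rw [Real.mul_rpow hτ.le (abs_nonneg _), Real.rpow_add hτ, Real.rpow_natCast]
  ring

variable [FiniteDimensional ℝ E]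

theorem exists_linearIsometryEquiv_apply_zero_eq_inner {n : ℕ}
    (hn : Module.finrank ℝ E = n + 1) {e : E} (he : ‖e‖ = 1) :
    ∃ L : E ≃ₗᵢ[ℝ] EuclideanSpace ℝ (Fin (n + 1)), ∀ x, L x 0 = inner ℝ e x := by
  have horth : Orthonormal ℝ (domRestrict {0} fun _ : Fin (n + 1) => e) :=
    ⟨fun _ => he, fun i j hij => (hij (Subsingleton.elim i j)).elim⟩
  obtain ⟨b, hb⟩ := horth.exists_orthonormalBasis_extension_of_card_eq (by simpa using hn)
  refine ⟨b.repr, fun x => ?_⟩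
  rw [b.repr_apply_apply, hb 0 rfl]

variable [MeasurableSpace E] [BorelSpace E]

theorem integral_abs_inner_rpow_mul_exp {α : ℝ} (hα : -1 < α) {e : E} (he : ‖e‖ = 1) :
    ∫ x : E, |inner ℝ e x| ^ α * Real.exp (-‖x‖ ^ 2) =
      Real.Gamma ((1 + α) / 2) * Real.pi ^ (((Module.finrank ℝ E : ℝ) - 1) / 2) := by
  have : Nontrivial E := ⟨e, 0, norm_ne_zero_iff.1 (by simp [he])⟩
  obtain ⟨n, hn⟩ := Nat.exists_eq_add_one.2 (Module.finrank_pos (R := ℝ) (M := E))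
  obtain ⟨L, hL⟩ := exists_linearIsometryEquiv_apply_zero_eq_inner hn he
  have hsubst := L.measurePreserving.integral_comp L.toHomeomorph.measurableEmbedding
    fun x => |x 0| ^ α * Real.exp (-‖x‖ ^ 2)
  simp only [hL, L.norm_map] at hsubst
  rw [hsubst, integral_abs_apply_zero_rpow_mul_exp hα, hn]
  push_cast
  ring_nf

theorem integral_sphere_abs_inner_rpow {α : ℝ} (hα : -1 < α) {e : E} (he : ‖e‖ = 1) :
    ∫ θ : sphere (0 : E) 1, |inner ℝ e (θ : E)| ^ α ∂(volume : Measure E).toSphere =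
      2 * halfSphereMoment (Module.finrank ℝ E) α := by
  have : Nontrivial E := ⟨e, 0, norm_ne_zero_iff.1 (by simp [he])⟩
  have hE : 0 < Module.finrank ℝ E := Module.finrank_pos
  have hE' : (1 : ℝ) ≤ Module.finrank ℝ E := by exact_mod_cast hE
  have hgauss := integral_abs_inner_rpow_mul_exp hα he
  have hint : Integrable fun x : E => |inner ℝ e x| ^ α * Real.exp (-‖x‖ ^ 2) := by
    refine not_imp_comm.1 integral_undef (hgauss ▸ ?_)
    exact (mul_pos (Real.Gamma_pos_of_pos (by linarith))
      (Real.rpow_pos_of_pos Real.pi_pos _)).ne'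
  rw [integral_eq_integral_sphere_radial hint] at hgauss
  simp_rw [integral_radial_abs_inner_rpow_mul_exp hα e hE] at hgauss
  rw [integral_mul_const] at hgauss
  have hΓ : 0 < Real.Gamma ((Module.finrank ℝ E + α) / 2) :=
    Real.Gamma_pos_of_pos (by linarith)
  rw [halfSphereMoment]
  field_simp at hgauss ⊢
  linarith

end SphereMoment

section Chord

/-- The distance `τ` from a point of a chord of half-length `R`, lying at signed distance `R * t`
from the midpoint, to the point ahead of it at Klein-model distance `artanh s`. -/
noncomputable def chordPoint (R t s : ℝ) : ℝ :=
  R * (1 - t ^ 2) * s / (1 + t * s)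

variable {α ε R t s τ : ℝ}

theorem one_add_mul_pos (ht : |t| < 1) (hs0 : 0 ≤ s) (hs1 : s ≤ 1) : 0 < 1 + t * s := by
  have hts : |t * s| < 1 := by
    rw [abs_mul, abs_of_nonneg hs0]
    exact (mul_le_of_le_one_right (abs_nonneg t) hs1).trans_lt ht
  linarith [(abs_lt.1 hts).1]

theorem one_sub_sq_pos_of_abs_lt_one (ht : |t| < 1) : 0 < 1 - t ^ 2 :=
  sub_pos.2 ((sq_lt_one_iff_abs_lt_one t).2 ht)

theorem chordPoint_one (ht : |t| < 1) : chordPoint R t 1 = R * (1 - t) := by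
  have hq : 1 + t ≠ 0 := by linarith [(abs_lt.1 ht).1]
  rw [chordPoint, mul_one, mul_one, div_eq_iff hq]
  ring

theorem chordPoint_pos (hR : 0 < R) (ht : |t| < 1) (hs0 : 0 < s) (hs1 : s ≤ 1) :
    0 < chordPoint R t s := by
  have := one_sub_sq_pos_of_abs_lt_one ht
  have := one_add_mul_pos ht hs0.le hs1
  rw [chordPoint]
  positivity

theorem chordPoint_le (hR : 0 < R) (ht : |t| < 1) (hs0 : 0 ≤ s) (hs1 : s ≤ 1) :
    chordPoint R t s ≤ R * (1 - t) := by
  have hlt := abs_lt.1 ht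
  rw [chordPoint, div_le_iff₀ (one_add_mul_pos ht hs0 hs1)]
  nlinarith [mul_nonneg hR.le (mul_nonneg (by linarith : 0 ≤ 1 - t) (sub_nonneg.2 hs1))]

theorem hasDerivAt_chordPoint (hq : 1 + t * s ≠ 0) :
    HasDerivAt (chordPoint R t) (R * (1 - t ^ 2) / (1 + t * s) ^ 2) s := by
  have hnum : HasDerivAt (fun s => R * (1 - t ^ 2) * s) (R * (1 - t ^ 2)) s := by
    simpa using (hasDerivAt_id s).const_mul (R * (1 - t ^ 2))
  have hden : HasDerivAt (fun s => 1 + t * s) t s := by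
    simpa using ((hasDerivAt_id s).const_mul t).const_add 1
  exact (hnum.div hden hq).congr_deriv (by ring)

theorem sq_sub_sq_add_chordPoint (hq : 1 + t * s ≠ 0) :
    R ^ 2 - (R * t + chordPoint R t s) ^ 2 =
      R ^ 2 * (1 - t ^ 2) * (1 - s ^ 2) / (1 + t * s) ^ 2 := by
  rw [chordPoint]
  field_simp
  ring

theorem sq_sub_sq_add_pos_iff (hR : 0 < R) (ht : |t| < 1) (hτ : 0 < τ) :
    0 < R ^ 2 - (R * t + τ) ^ 2 ↔ τ < R * (1 - t) := by
  have hfactor : R ^ 2 - (R * t + τ) ^ 2 = (R * (1 - t) - τ) * (R * (1 + t) + τ) := by ring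
  have hpos : 0 < R * (1 + t) + τ :=
    add_pos (mul_pos hR (by linarith [(abs_lt.1 ht).1])) hτ
  rw [hfactor, mul_pos_iff_of_pos_right hpos, sub_pos]

theorem chordPoint_lt_iff (hR : 0 < R) (ht : |t| < 1) (hε0 : 0 ≤ ε) (hε1 : ε ≤ 1) (hτ0 : 0 < τ)
    (hτ1 : τ < R * (1 - t)) :
    R ^ 2 * (1 - t ^ 2) * (R ^ 2 - (R * t + τ) ^ 2) <
      (1 - ε ^ 2) * (R ^ 2 - R * t * (R * t + τ)) ^ 2 ↔ chordPoint R t ε < τ := by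
  have hlt := abs_lt.1 ht
  have hq := one_add_mul_pos ht hε0 hε1
  have hpos : 0 < R ^ 2 - R * t * (R * t + τ) := by
    have : t * τ < R * (1 - t ^ 2) := by
      rcases le_total t 0 with _ | _ <;> nlinarith [mul_nonneg hR.le (by linarith : 0 ≤ 1 - t)]
    nlinarith
  have hdist : (R ^ 2 - R * t * (R * t + τ)) ^ 2 -
      R ^ 2 * (1 - t ^ 2) * (R ^ 2 - (R * t + τ) ^ 2) = (R * τ) ^ 2 := by ring
  calc _ ↔ (ε * (R ^ 2 - R * t * (R * t + τ))) ^ 2 < (R * τ) ^ 2 := by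
        rw [← hdist, mul_pow]
        constructor <;> intro h <;> linarith
    _ ↔ ε * (R ^ 2 - R * t * (R * t + τ)) < R * τ :=
        sq_lt_sq₀ (by positivity) (by positivity)
    _ ↔ R * (R * (1 - t ^ 2) * ε) < R * (τ * (1 + t * ε)) := by
        constructor <;> intro h <;> linarith
    _ ↔ chordPoint R t ε < τ := by
        rw [mul_lt_mul_iff_right₀ hR, chordPoint, div_lt_iff₀ hq]

theorem chordPoint_integrand (hR : 0 < R) (ht : |t| < 1) (hs0 : 0 < s) (hs1 : s ≤ 1) :
    ((R ^ 2 * (1 - t ^ 2)) ^ ((α - 1) / 2) -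
        (R ^ 2 - (R * t + chordPoint R t s) ^ 2) ^ ((α - 1) / 2)) *
      chordPoint R t s ^ (-1 - α) * (R * (1 - t ^ 2) / (1 + t * s) ^ 2) =
    (R ^ 2 * (1 - t ^ 2)) ^ ((α - 1) / 2 - α) * R ^ α * halfChordIntegrand α t s := by
  have hq := one_add_mul_pos ht hs0.le hs1
  have ht2 := one_sub_sq_pos_of_abs_lt_one ht
  have hs2 : 0 ≤ 1 - s ^ 2 := by nlinarith
  rw [sq_sub_sq_add_chordPoint hq.ne', chordPoint, halfChordIntegrand]
  set q := 1 + t * s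
  set δ := R ^ 2 * (1 - t ^ 2) with hδ_def
  have hδ : 0 < δ := by positivity
  have hRt : R * (1 - t ^ 2) = δ / R := by rw [hδ_def]; field_simp
  have hq_pow : (q ^ 2) ^ ((α - 1) / 2) = q ^ (α - 1) := by
    rw [← Real.rpow_two, ← Real.rpow_mul hq.le]; congr 1; ring
  have hq_split : q ^ (-1 - α) = (q ^ (α - 1))⁻¹ * (q ^ 2)⁻¹ := by
    rw [← Real.rpow_neg hq.le, ← Real.rpow_two, ← Real.rpow_neg hq.le, ← Real.rpow_add hq]
    congr 1; ring
  have hδR_split : (δ / R) ^ (-1 - α) = (δ / R)⁻¹ * (δ ^ (-α) * R ^ α) := by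
    rw [sub_eq_add_neg (-1) α, Real.rpow_add (by positivity), Real.rpow_neg_one,
      Real.div_rpow hδ.le hR.le, Real.rpow_neg hR.le, div_inv_eq_mul]
  have hδ_split : δ ^ ((α - 1) / 2 - α) = δ ^ ((α - 1) / 2) * δ ^ (-α) := by
    rw [← Real.rpow_add hδ]; rfl
  rw [hRt, Real.div_rpow (by positivity) (by positivity), Real.mul_rpow hδ.le hs2,
    Real.div_rpow (by positivity) hq.le, Real.mul_rpow (by positivity) hs0.le, hq_pow, hq_split,
    hδR_split, hδ_split]
  field_simp

theorem integral_chord_eq_halfChordIntegral (hα : 1 < α) (hε : 0 < ε) (hε1 : ε ≤ 1) (hR : 0 < R)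
    (ht : |t| < 1) :
    ∫ τ in chordPoint R t ε..R * (1 - t),
      ((R ^ 2 * (1 - t ^ 2)) ^ ((α - 1) / 2) - (R ^ 2 - (R * t + τ) ^ 2) ^ ((α - 1) / 2)) *
        τ ^ (-1 - α) =
    (R ^ 2 * (1 - t ^ 2)) ^ ((α - 1) / 2 - α) * R ^ α * halfChordIntegral α ε t := by
  have hq : ∀ s ∈ uIcc ε 1, 1 + t * s ≠ 0 := fun s hs => by
    rw [uIcc_of_le hε1] at hs
    exact (one_add_mul_pos ht (hε.le.trans hs.1) hs.2).ne'
  rw [← chordPoint_one ht, ← intervalIntegral.integral_comp_mul_deriv''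
    (f' := fun s => R * (1 - t ^ 2) / (1 + t * s) ^ 2), halfChordIntegral,
    ← intervalIntegral.integral_const_mul]
  · refine intervalIntegral.integral_congr fun s hs => ?_
    rw [uIcc_of_le hε1] at hs
    exact chordPoint_integrand hR ht (hε.trans_le hs.1) hs.2
  · exact fun s hs => (hasDerivAt_chordPoint (hq s hs)).continuousAt.continuousWithinAt
  · exact fun s hs => (hasDerivAt_chordPoint
      (hq s (Ioo_subset_Icc_self hs))).hasDerivWithinAt
  · exact ContinuousOn.div (by fun_prop) (by fun_prop) fun s hs => pow_ne_zero 2 (hq s hs)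
  · refine ContinuousOn.mul (ContinuousOn.sub continuousOn_const ?_) ?_
    · exact ContinuousOn.rpow_const (by fun_prop) fun _ _ => Or.inr (by linarith)
    · rintro _ ⟨s, hs, rfl⟩
      rw [uIcc_of_le hε1] at hs
      exact (Real.continuousAt_rpow_const _ _ (Or.inl
        (chordPoint_pos hR ht (hε.trans_le hs.1) hs.2).ne')).continuousWithinAt

end Chord

section GroundState

variable {E : Type*} [NormedAddCommGroup E] {α : ℝ} {x : E}

/-- The ground state `(1 - ‖x‖²) ^ ((α - 1) / 2)` of the Hardy inequality in the unit ball. -/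
noncomputable def groundState (α : ℝ) (x : E) : ℝ :=
  (1 - ‖x‖ ^ 2) ^ ((α - 1) / 2)

theorem one_sub_norm_sq_pos (hx : ‖x‖ < 1) : 0 < 1 - ‖x‖ ^ 2 :=
  sub_pos.2 ((sq_lt_one_iff₀ (norm_nonneg x)).2 hx)

theorem groundState_pos (hx : ‖x‖ < 1) : 0 < groundState α x :=
  Real.rpow_pos_of_pos (one_sub_norm_sq_pos hx) _

theorem groundState_le_one (hα : 1 ≤ α) (hx : ‖x‖ < 1) : groundState α x ≤ 1 :=
  Real.rpow_le_one (one_sub_norm_sq_pos hx).le (by nlinarith [norm_nonneg x]) (by linarith)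

theorem measurable_groundState [MeasurableSpace E] [BorelSpace E] :
    Measurable (groundState (E := E) α) := by
  unfold groundState
  fun_prop

end GroundState

section TruncatedKernel

variable {E : Type*} [NormedAddCommGroup E] [InnerProductSpace ℝ E] {α ε ρ : ℝ} {x y : E}

/-- The pairs of points of the unit ball whose distance in the Klein model of hyperbolic space
exceeds `artanh ε`. -/
def kleinFar (E : Type*) [NormedAddCommGroup E] [InnerProductSpace ℝ E] (ε : ℝ) : Set (E × E) :=
  {z | (1 - ‖z.1‖ ^ 2) * (1 - ‖z.2‖ ^ 2) < (1 - ε ^ 2) * (1 - inner ℝ z.1 z.2) ^ 2}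

open Classical in
/-- The kernel of the form `energy`, restricted to the pairs at Klein-model distance more than
`artanh ε`. -/
noncomputable def truncatedKernel (α ε : ℝ) (x y : E) : ℝ :=
  if (x, y) ∈ kleinFar E ε then (‖x - y‖ ^ (Module.finrank ℝ E + α))⁻¹ else 0

theorem truncatedKernel_nonneg : 0 ≤ truncatedKernel α ε x y := by
  unfold truncatedKernel
  split_ifs <;> positivity

theorem truncatedKernel_comm : truncatedKernel α ε x y = truncatedKernel α ε y x := by
  simp only [truncatedKernel, kleinFar, Set.mem_ofPred_eq, norm_sub_rev x y,
    real_inner_comm x y, mul_comm (1 - ‖x‖ ^ 2)]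

theorem mul_one_sub_norm_le_norm_sub (hε : 0 ≤ ε) (hy : ‖y‖ < 1)
    (hxy : (x, y) ∈ kleinFar E ε) : ε * (1 - ‖x‖) ≤ ‖x - y‖ := by
  have hfar : (1 - ‖x‖ ^ 2) * (1 - ‖y‖ ^ 2) < (1 - ε ^ 2) * (1 - inner ℝ x y) ^ 2 := hxy
  have hinner := real_inner_le_norm x y
  have hsq : (inner ℝ x y) ^ 2 ≤ (‖x‖ * ‖y‖) ^ 2 :=
    sq_le_sq.2 ((abs_real_inner_le_norm x y).trans (le_abs_self _))
  have hnorm := norm_sub_sq_real x y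
  calc ε * (1 - ‖x‖) ≤ ε * (1 - inner ℝ x y) := by
        gcongr
        nlinarith [norm_nonneg x, norm_nonneg y]
    _ ≤ ‖x - y‖ := by
        refine le_of_sq_le_sq ?_ (norm_nonneg _)
        nlinarith

theorem truncatedKernel_le (hα : 0 ≤ α) (hε : 0 < ε) (hρ : ρ < 1) (hx : ‖x‖ ≤ ρ)
    (hy : ‖y‖ < 1) :
    truncatedKernel α ε x y ≤ ((ε * (1 - ρ)) ^ (Module.finrank ℝ E + α))⁻¹ := by
  have hpos : 0 < ε * (1 - ρ) := mul_pos hε (by linarith)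
  unfold truncatedKernel
  split_ifs with hxy
  · have hdist : ε * (1 - ρ) ≤ ‖x - y‖ :=
      le_trans (by gcongr) (mul_one_sub_norm_le_norm_sub hε.le hy hxy)
    have := Real.rpow_pos_of_pos hpos (Module.finrank ℝ E + α)
    gcongr
  · positivity

variable [MeasurableSpace E] [BorelSpace E] [SecondCountableTopology E]

theorem measurableSet_kleinFar : MeasurableSet (kleinFar E ε) := by
  unfold kleinFar
  exact measurableSet_lt (by fun_prop) (by fun_prop)

theorem measurable_truncatedKernel :
    Measurable fun z : E × E => truncatedKernel α ε z.1 z.2 := by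
  unfold truncatedKernel
  exact Measurable.ite measurableSet_kleinFar (by fun_prop) measurable_const

end TruncatedKernel

section ChordsOfBall

variable {E : Type*} [NormedAddCommGroup E] [InnerProductSpace ℝ E] {α ε τ c : ℝ} {x e θ : E}

/-- Half the length of the chord of the unit ball through `x` in the direction of the unit
vector `θ`. -/
noncomputable def chordHalfLength (x θ : E) : ℝ :=
  √(1 - ‖x‖ ^ 2 + (inner ℝ x θ) ^ 2)

/-- The signed distance of `x` from the midpoint of the chord through `x` in the direction `θ`, as
a fraction of `chordHalfLength x θ`. -/
noncomputable def chordPosition (x θ : E) : ℝ :=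
  inner ℝ x θ / chordHalfLength x θ

theorem chordHalfLength_neg : chordHalfLength x (-θ) = chordHalfLength x θ := by
  simp [chordHalfLength]

theorem chordPosition_neg : chordPosition x (-θ) = -chordPosition x θ := by
  rw [chordPosition, chordPosition, chordHalfLength_neg, inner_neg_right, neg_div]

theorem chordHalfLength_pos (hx : ‖x‖ < 1) : 0 < chordHalfLength x θ :=
  Real.sqrt_pos.2 (add_pos_of_pos_of_nonneg (one_sub_norm_sq_pos hx) (sq_nonneg _))

theorem sq_chordHalfLength (hx : ‖x‖ < 1) :
    chordHalfLength x θ ^ 2 = 1 - ‖x‖ ^ 2 + (inner ℝ x θ) ^ 2 :=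
  Real.sq_sqrt (add_nonneg (one_sub_norm_sq_pos hx).le (sq_nonneg _))

theorem chordHalfLength_mul_chordPosition (hx : ‖x‖ < 1) :
    chordHalfLength x θ * chordPosition x θ = inner ℝ x θ :=
  mul_div_cancel₀ _ (chordHalfLength_pos hx).ne'

theorem sq_chordHalfLength_mul_one_sub_sq_chordPosition (hx : ‖x‖ < 1) :
    chordHalfLength x θ ^ 2 * (1 - chordPosition x θ ^ 2) = 1 - ‖x‖ ^ 2 := by
  rw [mul_sub, mul_one, ← mul_pow, chordHalfLength_mul_chordPosition hx, sq_chordHalfLength hx]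
  ring

theorem abs_chordPosition_lt_one (hx : ‖x‖ < 1) : |chordPosition x θ| < 1 := by
  have hpos := one_sub_norm_sq_pos hx
  rw [← sq_chordHalfLength_mul_one_sub_sq_chordPosition (θ := θ) hx] at hpos
  rw [← sq_lt_one_iff_abs_lt_one, ← sub_pos]
  exact pos_of_mul_pos_right hpos (sq_nonneg _)

theorem chordHalfLength_le_one (hx : ‖x‖ < 1) (hθ : ‖θ‖ = 1) : chordHalfLength x θ ≤ 1 := by
  have hinner := abs_real_inner_le_norm x θ
  rw [hθ, mul_one, ← sq_le_sq₀ (abs_nonneg _) (norm_nonneg _), sq_abs] at hinner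
  rw [← sq_le_one_iff₀ (chordHalfLength_pos hx).le, sq_chordHalfLength hx]
  linarith

theorem abs_inner_le_chordHalfLength (he : ‖e‖ = 1) (hθ : ‖θ‖ = 1) (hc0 : 0 ≤ c) (hc1 : c < 1) :
    |inner ℝ e θ| ≤ chordHalfLength (c • e) θ := by
  have hinner := abs_real_inner_le_norm e θ
  rw [hθ, he, mul_one, ← sq_le_one_iff_abs_le_one] at hinner
  rw [chordHalfLength, norm_smul, he, real_inner_smul_left, mul_one, Real.norm_of_nonneg hc0]
  refine Real.abs_le_sqrt ?_
  nlinarith [mul_nonneg (by nlinarith : 0 ≤ 1 - c ^ 2) (sub_nonneg.2 hinner)]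

theorem one_sub_norm_add_smul_sq (hx : ‖x‖ < 1) (hθ : ‖θ‖ = 1) :
    1 - ‖x + τ • θ‖ ^ 2 =
      chordHalfLength x θ ^ 2 - (chordHalfLength x θ * chordPosition x θ + τ) ^ 2 := by
  rw [chordHalfLength_mul_chordPosition hx, sq_chordHalfLength hx, norm_add_sq_real, norm_smul,
    hθ, mul_one, inner_smul_right, Real.norm_eq_abs, sq_abs]
  ring

theorem one_sub_inner_add_smul (hx : ‖x‖ < 1) :
    1 - inner ℝ x (x + τ • θ) = chordHalfLength x θ ^ 2 - chordHalfLength x θ *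
      chordPosition x θ * (chordHalfLength x θ * chordPosition x θ + τ) := by
  rw [chordHalfLength_mul_chordPosition hx, sq_chordHalfLength hx, inner_add_right,
    inner_smul_right, real_inner_self_eq_norm_sq]
  ring

theorem mem_ball_and_mem_kleinFar_add_smul_iff (hε0 : 0 ≤ ε) (hε1 : ε ≤ 1) (hx : ‖x‖ < 1)
    (hθ : ‖θ‖ = 1) (hτ : 0 < τ) :
    x + τ • θ ∈ ball 0 1 ∧ (x, x + τ • θ) ∈ kleinFar E ε ↔
      τ ∈ Ioo (chordPoint (chordHalfLength x θ) (chordPosition x θ) ε)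
        (chordHalfLength x θ * (1 - chordPosition x θ)) := by
  have hR := chordHalfLength_pos (θ := θ) hx
  have ht := abs_chordPosition_lt_one (θ := θ) hx
  have hball : x + τ • θ ∈ ball 0 1 ↔
      τ < chordHalfLength x θ * (1 - chordPosition x θ) := by
    rw [mem_ball_zero_iff, ← sq_lt_one_iff₀ (norm_nonneg _), ← sub_pos,
      one_sub_norm_add_smul_sq hx hθ, sq_sub_sq_add_pos_iff hR ht hτ]
  rw [hball, and_comm]
  refine and_congr_left fun hτ1 => ?_
  rw [← chordPoint_lt_iff hR ht hε0 hε1 hτ hτ1, kleinFar, Set.mem_ofPred_eq,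
    one_sub_norm_add_smul_sq hx hθ, one_sub_inner_add_smul hx,
    sq_chordHalfLength_mul_one_sub_sq_chordPosition hx]

end ChordsOfBall

section TruncatedOperator

variable {E : Type*} [NormedAddCommGroup E] [InnerProductSpace ℝ E] {α ε τ c : ℝ} {x e θ : E}

/-- The integrand, in the second variable, of the truncated regional fractional Laplacian of the
ground state of the unit ball at `x`. -/
noncomputable def groundStateJump (α ε : ℝ) (x : E) : E → ℝ :=
  (ball 0 1).indicator fun y =>
    (groundState α x - groundState α y) * truncatedKernel α ε x y

theorem norm_groundStateJump_le (hα : 1 ≤ α) (hε : 0 < ε) (hx : ‖x‖ < 1) (y : E) :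
    ‖groundStateJump α ε x y‖ ≤ ((ε * (1 - ‖x‖)) ^ (Module.finrank ℝ E + α))⁻¹ := by
  by_cases hy : y ∈ ball 0 1
  · have hy' : ‖y‖ < 1 := mem_ball_zero_iff.1 hy
    have hker := truncatedKernel_le (α := α) (y := y) (by linarith) hε hx le_rfl hy'
    have hjump : |groundState α x - groundState α y| ≤ 1 :=
      abs_sub_le_of_nonneg_of_le (groundState_pos hx).le (groundState_le_one hα hx)
        (groundState_pos hy').le (groundState_le_one hα hy')
    rw [groundStateJump, indicator_of_mem hy, norm_mul, Real.norm_eq_abs,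
      Real.norm_of_nonneg truncatedKernel_nonneg]
    exact (mul_le_of_le_one_left truncatedKernel_nonneg hjump).trans hker
  · rw [groundStateJump, indicator_of_notMem hy, norm_zero]
    have : 0 < ε * (1 - ‖x‖) := mul_pos hε (by linarith)
    positivity

theorem mul_chordPair_le (hα1 : 1 < α) (hα2 : α < 2) (hε : 0 < ε) (hε2 : ε ≤ 1 / 2)
    (he : ‖e‖ = 1) (hθ : ‖θ‖ = 1) (hc0 : 0 ≤ c) (hc1 : c < 1) :
    |inner ℝ e θ| ^ α * chordIntegral α ε 1 +
        (α - 1) * (2 - α) / 4 * (1 - ‖c • e‖ ^ 2) ≤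
      chordHalfLength (c • e) θ ^ α * chordIntegral α ε (chordPosition (c • e) θ) := by
  have hx : ‖c • e‖ < 1 := by rwa [norm_smul, he, mul_one, Real.norm_of_nonneg hc0]
  have hR0 := chordHalfLength_pos (θ := θ) hx
  have hR1 := chordHalfLength_le_one hx hθ
  have ht := (abs_chordPosition_lt_one (θ := θ) hx).le
  have hchord := chordIntegral_one_add_le hα1 hα2 hε hε2 ht
  have hA := chordIntegral_one_nonneg hα1 hε (by linarith : ε ≤ 1)
  rw [← sq_chordHalfLength_mul_one_sub_sq_chordPosition (θ := θ) hx]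
  have heR := abs_inner_le_chordHalfLength he hθ hc0 hc1
  set R := chordHalfLength (c • e) θ
  set t := chordPosition (c • e) θ
  have hRα : R ^ 2 ≤ R ^ α := by
    rw [← Real.rpow_two]
    exact Real.rpow_le_rpow_of_exponent_ge hR0 hR1 hα2.le
  have ht2 : 0 ≤ 1 - t ^ 2 := sub_nonneg.2 ((sq_le_one_iff_abs_le_one t).2 ht)
  have : 0 ≤ (α - 1) * (2 - α) / 4 := by
    have : 0 ≤ (α - 1) * (2 - α) := mul_nonneg (by linarith) (by linarith)
    positivity
  calc _ ≤ R ^ α * chordIntegral α ε 1 +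
        (α - 1) * (2 - α) / 4 * (R ^ α * (1 - t ^ 2)) := by gcongr
    _ = R ^ α * (chordIntegral α ε 1 + (α - 1) * (2 - α) / 4 * (1 - t ^ 2)) := by ring
    _ ≤ _ := by gcongr

theorem exists_norm_eq_one_smul [Nontrivial E] (x : E) : ∃ e : E, ‖e‖ = 1 ∧ x = ‖x‖ • e := by
  rcases eq_or_ne x 0 with rfl | hx
  · obtain ⟨e, he⟩ := exists_norm_eq E zero_le_one
    exact ⟨e, he, by simp⟩
  · exact ⟨‖x‖⁻¹ • x, by simp [norm_smul, hx], by simp [smul_smul, hx]⟩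

variable [FiniteDimensional ℝ E]

theorem pow_smul_groundStateJump_add_smul [Nontrivial E] (hε0 : 0 ≤ ε) (hε1 : ε ≤ 1)
    (hx : ‖x‖ < 1) (hθ : ‖θ‖ = 1) (hτ : 0 < τ) :
    τ ^ (Module.finrank ℝ E - 1) • groundStateJump α ε x (x + τ • θ) =
      (Ioo (chordPoint (chordHalfLength x θ) (chordPosition x θ) ε)
        (chordHalfLength x θ * (1 - chordPosition x θ))).indicator (fun τ =>
          ((1 - ‖x‖ ^ 2) ^ ((α - 1) / 2) - (chordHalfLength x θ ^ 2 -
            (chordHalfLength x θ * chordPosition x θ + τ) ^ 2) ^ ((α - 1) / 2)) *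
          τ ^ (-1 - α)) τ := by
  classical
  have hiff := mem_ball_and_mem_kleinFar_add_smul_iff hε0 hε1 hx hθ hτ
  have hpow : τ ^ (Module.finrank ℝ E - 1) * (τ ^ (Module.finrank ℝ E + α))⁻¹ =
      τ ^ (-1 - α) := by
    rw [← Real.rpow_neg hτ.le, ← Real.rpow_natCast, ← Real.rpow_add hτ,
      Nat.cast_sub Module.finrank_pos]
    congr 1
    push_cast
    ring
  have hdist : ‖x - (x + τ • θ)‖ = τ := by simp [norm_smul, hθ, abs_of_pos hτ]
  simp only [groundStateJump, truncatedKernel, indicator_apply, ← hiff, hdist, groundState,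
    one_sub_norm_add_smul_sq hx hθ, ite_and, ← hpow]
  split_ifs <;> simp only [smul_eq_mul] <;> ring

theorem integral_radial_groundStateJump (hα : 1 < α) (hε : 0 < ε) (hε1 : ε ≤ 1) (hx : ‖x‖ < 1)
    (hθ : ‖θ‖ = 1) :
    ∫ τ in Ioi (0 : ℝ), τ ^ (Module.finrank ℝ E - 1) • groundStateJump α ε x (x + τ • θ) =
      (1 - ‖x‖ ^ 2) ^ ((α - 1) / 2 - α) * chordHalfLength x θ ^ α *
        halfChordIntegral α ε (chordPosition x θ) := by
  have : Nontrivial E := ⟨θ, 0, norm_ne_zero_iff.1 (by simp [hθ])⟩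
  have hR := chordHalfLength_pos (θ := θ) hx
  have ht := abs_chordPosition_lt_one (θ := θ) hx
  have hsub : Ioo (chordPoint (chordHalfLength x θ) (chordPosition x θ) ε)
      (chordHalfLength x θ * (1 - chordPosition x θ)) ⊆ Ioi 0 :=
    fun τ hτ => (chordPoint_pos hR ht hε hε1).trans hτ.1
  rw [setIntegral_congr_fun measurableSet_Ioi fun τ hτ =>
      pow_smul_groundStateJump_add_smul (α := α) hε.le hε1 hx hθ hτ,
    setIntegral_indicator measurableSet_Ioo, inter_eq_right.2 hsub,
    ← sq_chordHalfLength_mul_one_sub_sq_chordPosition (θ := θ) hx,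
    ← integral_chord_eq_halfChordIntegral hα hε hε1 hR ht,
    intervalIntegral.integral_of_le (chordPoint_le hR ht hε.le hε1), integral_Ioc_eq_integral_Ioo]

theorem mul_le_radial_groundStateJump_add (hα1 : 1 < α) (hα2 : α < 2) (hε : 0 < ε)
    (hε2 : ε ≤ 1 / 2) (he : ‖e‖ = 1) (hθ : ‖θ‖ = 1) (hc0 : 0 ≤ c) (hc1 : c < 1) :
    (1 - ‖c • e‖ ^ 2) ^ ((α - 1) / 2 - α) *
        (|inner ℝ e θ| ^ α * chordIntegral α ε 1 +
          (α - 1) * (2 - α) / 4 * (1 - ‖c • e‖ ^ 2)) ≤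
      (∫ τ in Ioi (0 : ℝ),
        τ ^ (Module.finrank ℝ E - 1) • groundStateJump α ε (c • e) (c • e + τ • θ)) +
      ∫ τ in Ioi (0 : ℝ),
        τ ^ (Module.finrank ℝ E - 1) • groundStateJump α ε (c • e) (c • e + τ • -θ) := by
  have hx : ‖c • e‖ < 1 := by rwa [norm_smul, he, mul_one, Real.norm_of_nonneg hc0]
  have hε1 : ε ≤ 1 := by linarith
  rw [integral_radial_groundStateJump hα1 hε hε1 hx hθ,
    integral_radial_groundStateJump hα1 hε hε1 hx (by rwa [norm_neg]), chordHalfLength_neg,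
    chordPosition_neg, ← mul_add, mul_assoc]
  exact mul_le_mul_of_nonneg_left (mul_chordPair_le hα1 hα2 hε hε2 he hθ hc0 hc1)
    (Real.rpow_nonneg (one_sub_norm_sq_pos hx).le _)

variable [MeasurableSpace E] [BorelSpace E]

theorem measurable_groundStateJump : Measurable (groundStateJump α ε x) := by
  have hkernel : Measurable (truncatedKernel α ε x) :=
    Measurable.of_uncurry_left measurable_truncatedKernel
  exact ((measurable_const.sub measurable_groundState).mul hkernel).indicator measurableSet_ball

theorem integrable_groundStateJump {μ : Measure E} [IsFiniteMeasureOnCompacts μ] (hα : 1 ≤ α)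
    (hε : 0 < ε) (hx : ‖x‖ < 1) : Integrable (groundStateJump α ε x) μ := by
  have hsupport : Function.support (groundStateJump α ε x) ⊆ ball 0 1 := support_indicator_subset
  rw [← integrableOn_iff_integrable_of_support_subset hsupport]
  exact Measure.integrableOn_of_bounded measure_ball_lt_top.ne
    measurable_groundStateJump.aestronglyMeasurable
    (.of_forall (norm_groundStateJump_le hα hε hx))

theorem integrable_radial_integral_add {μ : Measure E} [μ.IsAddHaarMeasure] {f : E → ℝ}
    (hf : Integrable f μ) (x : E) :
    Integrable (fun θ : sphere (0 : E) 1 =>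
      (∫ τ in Ioi (0 : ℝ), τ ^ (Module.finrank ℝ E - 1) • f (x + τ • (θ : E))) +
        ∫ τ in Ioi (0 : ℝ), τ ^ (Module.finrank ℝ E - 1) • f (x + τ • (-θ : E)))
      μ.toSphere := by
  simp only [smul_neg]
  exact (integrable_radial_integral (hf.comp_add_left x)).add
    (integrable_radial_integral (hf.comp_add_left x).comp_neg)

theorem two_mul_integral_eq_integral_sphere_radial [Nontrivial E] {μ : Measure E}
    [μ.IsAddHaarMeasure] {f : E → ℝ} (hf : Integrable f μ) (x : E) :
    2 * ∫ y, f y ∂μ = ∫ θ : sphere (0 : E) 1,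
      ((∫ τ in Ioi (0 : ℝ), τ ^ (Module.finrank ℝ E - 1) • f (x + τ • (θ : E))) +
        ∫ τ in Ioi (0 : ℝ), τ ^ (Module.finrank ℝ E - 1) • f (x + τ • (-θ : E)))
      ∂μ.toSphere := by
  have hfwd : Integrable (fun z => f (x + z)) μ := hf.comp_add_left x
  have hbwd : Integrable (fun z => f (x + -z)) μ := hfwd.comp_neg
  simp only [smul_neg]
  rw [integral_add (integrable_radial_integral hfwd) (integrable_radial_integral hbwd),
    ← integral_eq_integral_sphere_radial hfwd, ← integral_eq_integral_sphere_radial hbwd,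
    integral_neg_eq_self (fun z => f (x + z)), integral_add_left_eq_self, two_mul]

theorem integrable_sphere_abs_inner_rpow {μ : Measure E} [μ.IsAddHaarMeasure] (hα : 0 ≤ α)
    (e : E) : Integrable (fun θ : sphere (0 : E) 1 => |inner ℝ e (θ : E)| ^ α) μ.toSphere := by
  refine Continuous.integrable_of_hasCompactSupport ?_ (HasCompactSupport.of_compactSpace _)
  exact Continuous.rpow_const (by fun_prop) fun _ => Or.inr hα

/-- The coefficient of the `L²` remainder left by the ground state in the Hardy inequality. -/
noncomputable def remainderCoeff (E : Type*) [NormedAddCommGroup E] [InnerProductSpace ℝ E]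
    [FiniteDimensional ℝ E] [MeasurableSpace E] [BorelSpace E] (α : ℝ) : ℝ :=
  (α - 1) * (2 - α) / 8 * (volume : Measure E).toSphere.real univ

theorem remainderCoeff_pos [Nontrivial E] (hα1 : 1 < α) (hα2 : α < 2) : 0 < remainderCoeff E α := by
  have : NeZero (volume : Measure E).toSphere := ⟨volume.toSphere_ne_zero⟩
  have hsphere : 0 < (volume : Measure E).toSphere.real univ := measureReal_univ_pos
  have : 0 < (α - 1) * (2 - α) := mul_pos (by linarith) (by linarith)
  unfold remainderCoeff
  positivity

theorem mul_le_integral_groundStateJump [Nontrivial E] (hα1 : 1 < α) (hα2 : α < 2) (hε : 0 < ε)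
    (hε2 : ε ≤ 1 / 2) (hx : ‖x‖ < 1) :
    (1 - ‖x‖ ^ 2) ^ ((α - 1) / 2 - α) *
        (halfSphereMoment (Module.finrank ℝ E) α * chordIntegral α ε 1 +
          remainderCoeff E α * (1 - ‖x‖ ^ 2)) ≤
      ∫ y, groundStateJump α ε x y := by
  obtain ⟨e, he, hxe⟩ := exists_norm_eq_one_smul x
  have hjump := integrable_groundStateJump (μ := volume) hα1.le hε hx
  have hmoment := (integrable_sphere_abs_inner_rpow (μ := volume) (by linarith : 0 ≤ α)
    e).mul_const (chordIntegral α ε 1)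
  set slack := (α - 1) * (2 - α) / 4 * (1 - ‖x‖ ^ 2)
  have hslack : Integrable (fun _ : sphere (0 : E) 1 => slack) (volume : Measure E).toSphere :=
    integrable_const slack
  have hsphere : ∫ θ : sphere (0 : E) 1, (1 - ‖x‖ ^ 2) ^ ((α - 1) / 2 - α) *
        (|inner ℝ e (θ : E)| ^ α * chordIntegral α ε 1 + slack) ∂volume.toSphere =
      (1 - ‖x‖ ^ 2) ^ ((α - 1) / 2 - α) *
        (2 * halfSphereMoment (Module.finrank ℝ E) α * chordIntegral α ε 1 +
          (volume : Measure E).toSphere.real univ * slack) := by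
    rw [integral_const_mul, integral_add hmoment hslack, integral_mul_const,
      integral_sphere_abs_inner_rpow (by linarith) he, integral_const, smul_eq_mul]
  have hmono := integral_mono ((hmoment.add hslack).const_mul _)
    (integrable_radial_integral_add hjump x) fun θ => by
      have hpair := mul_le_radial_groundStateJump_add (θ := (θ : E)) hα1 hα2 hε hε2 he (by simp)
        (norm_nonneg x) hx
      rwa [← hxe] at hpair
  rw [← two_mul_integral_eq_integral_sphere_radial hjump] at hmono
  have hbound := hsphere.symm.trans_le hmono
  simp only [slack] at hbound
  unfold remainderCoeff
  linarith

end TruncatedOperator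

section SymmetricKernel

variable {X : Type*} {k : X → X → ℝ} {w v : X → ℝ}

theorem mul_sub_mul_sq_eq_add (hk : ∀ x y, k x y = k y x) (z : X × X) :
    k z.1 z.2 * (w z.1 * v z.1 - w z.2 * v z.2) ^ 2 =
      k z.1 z.2 * (w z.1 * w z.2 * (v z.1 - v z.2) ^ 2) +
        (w z.1 * v z.1 ^ 2 * ((w z.1 - w z.2) * k z.1 z.2) +
          w z.swap.1 * v z.swap.1 ^ 2 *
            ((w z.swap.1 - w z.swap.2) * k z.swap.1 z.swap.2)) := by
  simp only [Prod.fst_swap, Prod.snd_swap, hk z.2 z.1]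
  ring

variable [MeasurableSpace X] {μ : Measure X} [SFinite μ] (hk : ∀ x y, k x y = k y x)
  (hvv : Integrable
    (fun z : X × X => k z.1 z.2 * (w z.1 * w z.2 * (v z.1 - v z.2) ^ 2)) (μ.prod μ))
  (hww : Integrable
    (fun z : X × X => w z.1 * v z.1 ^ 2 * ((w z.1 - w z.2) * k z.1 z.2)) (μ.prod μ))

include hk hvv hww

theorem integrable_prod_mul_sub_sq :
    Integrable (fun z : X × X => k z.1 z.2 * (w z.1 * v z.1 - w z.2 * v z.2) ^ 2)
      (μ.prod μ) := by
  simp only [mul_sub_mul_sq_eq_add hk]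
  exact hvv.add (hww.add hww.swap)

theorem integral_prod_mul_sub_sq :
    ∫ z : X × X, k z.1 z.2 * (w z.1 * v z.1 - w z.2 * v z.2) ^ 2 ∂(μ.prod μ) =
      ∫ z : X × X, k z.1 z.2 * (w z.1 * w z.2 * (v z.1 - v z.2) ^ 2) ∂(μ.prod μ) +
        2 * ∫ x, w x * v x ^ 2 * ∫ y, (w x - w y) * k x y ∂μ ∂μ := by
  have hswap := integral_prod_swap (μ := μ) (ν := μ)
    fun z : X × X => w z.1 * v z.1 ^ 2 * ((w z.1 - w z.2) * k z.1 z.2)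
  have hww' := hww.swap
  simp only [Function.comp_def] at hww'
  simp only [mul_sub_mul_sq_eq_add hk]
  rw [integral_add hvv (hww.fun_add hww'), integral_add hww hww', hswap, ← two_mul,
    integral_prod _ hww]
  simp only [integral_const_mul]

end SymmetricKernel

section TruncatedForm

variable {E : Type*} [NormedAddCommGroup E] [InnerProductSpace ℝ E] [FiniteDimensional ℝ E]
  [MeasurableSpace E] [BorelSpace E] {α ε ρ : ℝ} {v : E → ℝ}

/-- Lebesgue measure on the open unit ball. -/
noncomputable abbrev unitBallVolume (E : Type*) [NormedAddCommGroup E] [InnerProductSpace ℝ E]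
    [FiniteDimensional ℝ E] [MeasurableSpace E] [BorelSpace E] : Measure E :=
  volume.restrict (ball 0 1)

instance isFiniteMeasure_unitBallVolume : IsFiniteMeasure (unitBallVolume E) :=
  isFiniteMeasure_restrict.2 measure_ball_lt_top.ne

theorem ae_unitBallVolume_norm_lt_one : ∀ᵐ x ∂(unitBallVolume E), ‖x‖ < 1 :=
  (ae_restrict_mem measurableSet_ball).mono fun _ => mem_ball_zero_iff.1

theorem ae_prod_unitBallVolume_norm_lt_one :
    ∀ᵐ z ∂((unitBallVolume E).prod (unitBallVolume E)), ‖z.1‖ < 1 ∧ ‖z.2‖ < 1 :=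
  (Measure.quasiMeasurePreserving_fst.ae ae_unitBallVolume_norm_lt_one).and
    (Measure.quasiMeasurePreserving_snd.ae ae_unitBallVolume_norm_lt_one)

theorem integrable_truncatedKernel_mul_sq (hα : 0 ≤ α) (hε : 0 < ε) (hρ : ρ < 1)
    (hv : MemLp v 2 (unitBallVolume E)) (hvρ : ∀ x, ρ < ‖x‖ → v x = 0) :
    Integrable (fun z : E × E => truncatedKernel α ε z.1 z.2 * v z.1 ^ 2)
      ((unitBallVolume E).prod (unitBallVolume E)) := by
  have hsq := hv.integrable_sq.comp_fst (unitBallVolume E)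
  refine (hsq.const_mul ((ε * (1 - ρ)) ^ (Module.finrank ℝ E + α))⁻¹).mono'
    (measurable_truncatedKernel.aestronglyMeasurable.mul hsq.aestronglyMeasurable) ?_
  filter_upwards [ae_prod_unitBallVolume_norm_lt_one] with z hz
  rw [Real.norm_of_nonneg (mul_nonneg truncatedKernel_nonneg (sq_nonneg _))]
  rcases le_or_gt ‖z.1‖ ρ with h | h
  · gcongr
    exact truncatedKernel_le hα hε hρ h hz.2
  · simp [hvρ _ h]

variable (hα : 1 ≤ α) (hρ : ρ < 1) (hv : MemLp v 2 (unitBallVolume E))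
  (hvρ : ∀ x, ρ < ‖x‖ → v x = 0)

include hα hρ hv hvρ

theorem integrable_mul_sq_mul_one_sub_norm_sq_rpow :
    Integrable (fun x => (groundState α x * v x) ^ 2 * (1 - ‖x‖ ^ 2) ^ (-α))
      (unitBallVolume E) := by
  have hw := (measurable_groundState (E := E) (α := α)).aestronglyMeasurable
    (μ := unitBallVolume E)
  refine (hv.integrable_sq.const_mul ((1 - ρ ^ 2) ^ (-α))).mono'
    (((hw.mul hv.aestronglyMeasurable).pow 2).mul
      (Measurable.aestronglyMeasurable (by fun_prop))) ?_
  filter_upwards [ae_unitBallVolume_norm_lt_one] with x hx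
  have hx0 := one_sub_norm_sq_pos hx
  rw [Real.norm_of_nonneg (by positivity)]
  rcases le_or_gt ‖x‖ ρ with h | h
  · have hρ0 : 0 < 1 - ρ ^ 2 := by nlinarith [norm_nonneg x]
    calc _ = groundState α x ^ 2 * v x ^ 2 * (1 - ‖x‖ ^ 2) ^ (-α) := by ring
      _ ≤ 1 * v x ^ 2 * (1 - ρ ^ 2) ^ (-α) := by
          have hmono := Real.rpow_le_rpow_of_nonpos hρ0
            (by gcongr : 1 - ρ ^ 2 ≤ 1 - ‖x‖ ^ 2) (by linarith : -α ≤ 0)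
          have hw1 := pow_le_one₀ (n := 2) (groundState_pos hx).le (groundState_le_one hα hx)
          gcongr
      _ = _ := by ring
  · simp [hvρ x h]

variable (hε : 0 < ε)

include hε

theorem integrable_truncatedKernel_mul_sub_sq :
    Integrable (fun z : E × E => truncatedKernel α ε z.1 z.2 *
        (groundState α z.1 * groundState α z.2 * (v z.1 - v z.2) ^ 2))
      ((unitBallVolume E).prod (unitBallVolume E)) := by
  have hdom := integrable_truncatedKernel_mul_sq (by linarith : 0 ≤ α) hε hρ hv hvρ
  have hvm := hv.aestronglyMeasurable
  have hw := (measurable_groundState (E := E) (α := α)).aestronglyMeasurable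
    (μ := unitBallVolume E)
  refine ((hdom.add hdom.swap).const_mul 2).mono'
    (measurable_truncatedKernel.aestronglyMeasurable.mul
      ((hw.comp_fst.mul hw.comp_snd).mul ((hvm.comp_fst.sub hvm.comp_snd).pow 2))) ?_
  filter_upwards [ae_prod_unitBallVolume_norm_lt_one] with z ⟨hx, hy⟩
  have hk := truncatedKernel_nonneg (α := α) (ε := ε) (x := z.1) (y := z.2)
  have hwx := groundState_pos (α := α) hx
  have hwy := groundState_pos (α := α) hy
  have hww : groundState α z.1 * groundState α z.2 ≤ 1 :=
    mul_le_one₀ (groundState_le_one hα hx) hwy.le (groundState_le_one hα hy)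
  rw [Real.norm_of_nonneg (by positivity)]
  calc _ ≤ truncatedKernel α ε z.1 z.2 * (2 * (v z.1 ^ 2 + v z.2 ^ 2)) := by
        refine mul_le_mul_of_nonneg_left ?_ hk
        nlinarith [mul_le_of_le_one_left (sq_nonneg (v z.1 - v z.2)) hww,
          sq_nonneg (v z.1 + v z.2)]
    _ = _ := by
        simp only [Pi.add_apply, Function.comp_apply, Prod.fst_swap, Prod.snd_swap,
          truncatedKernel_comm (x := z.2) (y := z.1)]
        ring

theorem integrable_mul_sq_mul_truncatedKernel :
    Integrable (fun z : E × E => groundState α z.1 * v z.1 ^ 2 *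
        ((groundState α z.1 - groundState α z.2) * truncatedKernel α ε z.1 z.2))
      ((unitBallVolume E).prod (unitBallVolume E)) := by
  have hdom := integrable_truncatedKernel_mul_sq (by linarith : 0 ≤ α) hε hρ hv hvρ
  have hw := (measurable_groundState (E := E) (α := α)).aestronglyMeasurable
    (μ := unitBallVolume E)
  refine hdom.mono' ((hw.comp_fst.mul (hv.aestronglyMeasurable.comp_fst.pow 2)).mul
    ((hw.comp_fst.sub hw.comp_snd).mul measurable_truncatedKernel.aestronglyMeasurable)) ?_
  filter_upwards [ae_prod_unitBallVolume_norm_lt_one] with z ⟨hx, hy⟩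
  have hk := truncatedKernel_nonneg (α := α) (ε := ε) (x := z.1) (y := z.2)
  have hwx := groundState_pos (α := α) hx
  have hjump : |groundState α z.1 - groundState α z.2| ≤ 1 :=
    abs_sub_le_of_nonneg_of_le hwx.le (groundState_le_one hα hx)
      (groundState_pos hy).le (groundState_le_one hα hy)
  rw [norm_mul, norm_mul, norm_mul, Real.norm_of_nonneg hk, Real.norm_of_nonneg hwx.le,
    Real.norm_of_nonneg (sq_nonneg _), Real.norm_eq_abs]
  calc _ ≤ 1 * v z.1 ^ 2 * (1 * truncatedKernel α ε z.1 z.2) := by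
        gcongr
        exact groundState_le_one hα hx
    _ = _ := by ring

end TruncatedForm

section TruncatedHardy

variable {E : Type*} [NormedAddCommGroup E] {α ε ρ : ℝ} {v : E → ℝ} {x : E}

theorem groundState_mul_sq_mul_rpow (hx : ‖x‖ < 1) (t : ℝ) :
    groundState α x * t ^ 2 * (1 - ‖x‖ ^ 2) ^ ((α - 1) / 2 - α) =
      (groundState α x * t) ^ 2 * (1 - ‖x‖ ^ 2) ^ (-α) := by
  rw [groundState, Real.rpow_sub (one_sub_norm_sq_pos hx),
    Real.rpow_neg (one_sub_norm_sq_pos hx).le]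
  ring

theorem groundState_mul_rpow_mul_one_sub_norm_sq (hx : ‖x‖ < 1) :
    groundState α x * (1 - ‖x‖ ^ 2) ^ ((α - 1) / 2 - α) * (1 - ‖x‖ ^ 2) = 1 := by
  have hpos := one_sub_norm_sq_pos hx
  rw [groundState, ← Real.rpow_add hpos, ← Real.rpow_add_one hpos.ne']
  ring_nf
  exact Real.rpow_zero _

variable [InnerProductSpace ℝ E] [FiniteDimensional ℝ E] [MeasurableSpace E] [BorelSpace E]

theorem integral_sq_mul_one_sub_norm_sq_rpow_nonneg (u : E → ℝ) (s : ℝ) :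
    0 ≤ ∫ x, u x ^ 2 * (1 - ‖x‖ ^ 2) ^ s ∂(unitBallVolume E) :=
  integral_nonneg_of_ae <| ae_unitBallVolume_norm_lt_one.mono fun _ hx =>
    mul_nonneg (sq_nonneg _) (Real.rpow_nonneg (one_sub_norm_sq_pos hx).le _)

variable [Nontrivial E]

theorem add_le_mul_integral_sub_mul_truncatedKernel (hα1 : 1 < α) (hα2 : α < 2) (hε : 0 < ε)
    (hε2 : ε ≤ 1 / 2) (hx : ‖x‖ < 1) (t : ℝ) :
    halfSphereMoment (Module.finrank ℝ E) α * chordIntegral α ε 1 *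
        ((groundState α x * t) ^ 2 * (1 - ‖x‖ ^ 2) ^ (-α)) + remainderCoeff E α * t ^ 2 ≤
      groundState α x * t ^ 2 *
        ∫ y, (groundState α x - groundState α y) * truncatedKernel α ε x y ∂(unitBallVolume E) := by
  have hjump := mul_le_integral_groundStateJump hα1 hα2 hε hε2 hx
  simp only [groundStateJump, integral_indicator measurableSet_ball] at hjump
  refine le_trans (le_of_eq ?_) (mul_le_mul_of_nonneg_left hjump
    (mul_nonneg (groundState_pos hx).le (sq_nonneg t)))
  rw [← groundState_mul_sq_mul_rpow hx]
  linear_combination (-remainderCoeff E α * t ^ 2) *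
    groundState_mul_rpow_mul_one_sub_norm_sq (α := α) hx

theorem truncated_hardy (hα1 : 1 < α) (hα2 : α < 2) (hε : 0 < ε) (hε2 : ε ≤ 1 / 2) (hρ : ρ < 1)
    (hv : MemLp v 2 (unitBallVolume E)) (hvρ : ∀ x, ρ < ‖x‖ → v x = 0) :
    (∫ z : E × E, truncatedKernel α ε z.1 z.2 *
        (groundState α z.1 * groundState α z.2 * (v z.1 - v z.2) ^ 2)
        ∂((unitBallVolume E).prod (unitBallVolume E))) +
      2 * (halfSphereMoment (Module.finrank ℝ E) α * chordIntegral α ε 1 *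
          (∫ x, (groundState α x * v x) ^ 2 * (1 - ‖x‖ ^ 2) ^ (-α) ∂(unitBallVolume E)) +
        remainderCoeff E α * ∫ x, v x ^ 2 ∂(unitBallVolume E)) ≤
    ∫ z : E × E, truncatedKernel α ε z.1 z.2 *
        (groundState α z.1 * v z.1 - groundState α z.2 * v z.2) ^ 2
        ∂((unitBallVolume E).prod (unitBallVolume E)) := by
  have hcross := integrable_mul_sq_mul_truncatedKernel hα1.le hρ hv hvρ hε
  have hhardy := (integrable_mul_sq_mul_one_sub_norm_sq_rpow hα1.le hρ hv hvρ).const_mul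
    (halfSphereMoment (Module.finrank ℝ E) α * chordIntegral α ε 1)
  have hremainder := hv.integrable_sq.const_mul (remainderCoeff E α)
  have hinner := hcross.integral_prod_left
  simp only [integral_const_mul] at hinner
  have hlower := integral_mono_ae (hhardy.add hremainder) hinner
    (ae_unitBallVolume_norm_lt_one.mono fun x hx =>
      add_le_mul_integral_sub_mul_truncatedKernel hα1 hα2 hε hε2 hx (v x))
  rw [integral_prod_mul_sub_sq (k := truncatedKernel α ε) (w := groundState α) (v := v)
      (fun _ _ => truncatedKernel_comm)
      (integrable_truncatedKernel_mul_sub_sq hα1.le hρ hv hvρ hε) hcross,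
    ← integral_const_mul, ← integral_const_mul, ← integral_add hhardy hremainder]
  gcongr _ + 2 * ?_
  exact hlower

theorem truncated_hardy_lintegral (hα1 : 1 < α) (hα2 : α < 2) (hε : 0 < ε) (hε2 : ε ≤ 1 / 2)
    (hρ : ρ < 1) (hv : MemLp v 2 (unitBallVolume E)) (hvρ : ∀ x, ρ < ‖x‖ → v x = 0) :
    (∫⁻ z : E × E, ENNReal.ofReal (truncatedKernel α ε z.1 z.2 *
        (groundState α z.1 * groundState α z.2 * (v z.1 - v z.2) ^ 2))
        ∂((unitBallVolume E).prod (unitBallVolume E))) +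
      ENNReal.ofReal (2 * (halfSphereMoment (Module.finrank ℝ E) α * chordIntegral α ε 1 *
          (∫ x, (groundState α x * v x) ^ 2 * (1 - ‖x‖ ^ 2) ^ (-α) ∂(unitBallVolume E)) +
        remainderCoeff E α * ∫ x, v x ^ 2 ∂(unitBallVolume E))) ≤
    ∫⁻ z : E × E, ENNReal.ofReal (truncatedKernel α ε z.1 z.2 *
        (groundState α z.1 * v z.1 - groundState α z.2 * v z.2) ^ 2)
        ∂((unitBallVolume E).prod (unitBallVolume E)) := by
  have hform := integrable_truncatedKernel_mul_sub_sq hα1.le hρ hv hvρ hε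
  have hcross := integrable_mul_sq_mul_truncatedKernel hα1.le hρ hv hvρ hε
  have hpos : ∀ᵐ z ∂((unitBallVolume E).prod (unitBallVolume E)),
      0 ≤ truncatedKernel α ε z.1 z.2 *
        (groundState α z.1 * groundState α z.2 * (v z.1 - v z.2) ^ 2) := by
    filter_upwards [ae_prod_unitBallVolume_norm_lt_one] with z ⟨hx, hy⟩
    exact mul_nonneg truncatedKernel_nonneg
      (mul_nonneg (mul_pos (groundState_pos hx) (groundState_pos hy)).le (sq_nonneg _))
  rw [← ofReal_integral_eq_lintegral_ofReal hform hpos, ← ofReal_integral_eq_lintegral_ofReal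
      (integrable_prod_mul_sub_sq (k := truncatedKernel α ε) (w := groundState α) (v := v)
        (fun _ _ => truncatedKernel_comm) hform hcross)
      (.of_forall fun z => mul_nonneg truncatedKernel_nonneg (sq_nonneg _)),
    ← ENNReal.ofReal_add (integral_nonneg_of_ae hpos) ?_]
  · exact ENNReal.ofReal_le_ofReal (truncated_hardy hα1 hα2 hε hε2 hρ hv hvρ)
  · have hmoment := halfSphereMoment_nonneg (n := Module.finrank ℝ E) (by linarith : 0 ≤ α)
    have hchord := chordIntegral_one_nonneg hα1 hε (by linarith : ε ≤ 1)
    have hhardy := integral_sq_mul_one_sub_norm_sq_rpow_nonneg (fun x => groundState α x * v x) (-α)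
    have hremainder := (remainderCoeff_pos (E := E) hα1 hα2).le
    have : 0 ≤ ∫ x, v x ^ 2 ∂(unitBallVolume E) := integral_nonneg fun _ => sq_nonneg _
    positivity

end TruncatedHardy

section RemoveTruncation

variable {E : Type*} [NormedAddCommGroup E] [InnerProductSpace ℝ E] {α ε ε' ρ : ℝ} {x y : E}

theorem truncatedKernel_le_inv :
    truncatedKernel α ε x y ≤ (‖x - y‖ ^ (Module.finrank ℝ E + α))⁻¹ := by
  unfold truncatedKernel
  split_ifs
  · exact le_rfl
  · positivity

theorem truncatedKernel_anti (hε : 0 ≤ ε) (hεε' : ε ≤ ε') :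
    truncatedKernel α ε' x y ≤ truncatedKernel α ε x y := by
  have hsub : kleinFar E ε' ⊆ kleinFar E ε := fun z hz => by
    have hz' : (1 - ‖z.1‖ ^ 2) * (1 - ‖z.2‖ ^ 2) < (1 - ε' ^ 2) * (1 - inner ℝ z.1 z.2) ^ 2 := hz
    refine hz'.trans_le ?_
    gcongr
  by_cases h' : (x, y) ∈ kleinFar E ε'
  · simp only [truncatedKernel, if_pos h', if_pos (hsub h'), le_refl]
  · rw [truncatedKernel, if_neg h']
    exact truncatedKernel_nonneg

theorem one_sub_norm_sq_mul_one_sub_norm_sq_lt (hx : ‖x‖ < 1) (hxy : x ≠ y) :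
    (1 - ‖x‖ ^ 2) * (1 - ‖y‖ ^ 2) < (1 - inner ℝ x y) ^ 2 := by
  have hdist : 0 < ‖x - y‖ ^ 2 := pow_pos (norm_sub_pos_iff.2 hxy) 2
  rw [norm_sub_sq_real] at hdist
  nlinarith [mul_pos (one_sub_norm_sq_pos hx) hdist, sq_nonneg (‖x‖ ^ 2 - inner ℝ x y)]

theorem eventually_truncatedKernel_eq_inv (hα : 0 < α) (hx : ‖x‖ < 1) :
    ∀ᶠ ε in 𝓝 0, truncatedKernel α ε x y = (‖x - y‖ ^ (Module.finrank ℝ E + α))⁻¹ := by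
  rcases eq_or_ne x y with rfl | hxy
  · refine .of_forall fun ε => truncatedKernel_le_inv.antisymm ?_
    rw [sub_self, norm_zero, Real.zero_rpow (by positivity), inv_zero]
    exact truncatedKernel_nonneg
  · have hlim : Tendsto (fun ε : ℝ => (1 - ε ^ 2) * (1 - inner ℝ x y) ^ 2) (𝓝 0)
        (𝓝 ((1 - 0 ^ 2) * (1 - inner ℝ x y) ^ 2)) := Continuous.tendsto (by fun_prop) 0
    have hgap := one_sub_norm_sq_mul_one_sub_norm_sq_lt hx hxy
    filter_upwards [hlim.eventually_const_lt (by simpa using hgap)] with ε hε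
    exact if_pos hε

theorem tendsto_one_div_add_two : Tendsto (fun k : ℕ => 1 / ((k : ℝ) + 2)) atTop (𝓝[>] 0) := by
  refine tendsto_nhdsWithin_iff.2 ⟨?_, .of_forall fun k => mem_Ioi.2 (by positivity)⟩
  have := (tendsto_const_div_atTop_nhds_zero_nat (1 : ℝ)).comp (tendsto_add_atTop_nat 2)
  simpa [Function.comp_def] using this

/-- The integrand `w(x) w(y) (v(x) - v(y))² / |x - y|^(d + α)` of the quadratic form that remains
once the function is written as the ground state `w` times `v`. -/
noncomputable def groundStateIntegrand (α : ℝ) (v : E → ℝ) (x y : E) : ℝ :=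
  groundState α x * groundState α y * (v x - v y) ^ 2 / ‖x - y‖ ^ (Module.finrank ℝ E + α)

variable [FiniteDimensional ℝ E] [MeasurableSpace E] [BorelSpace E]

theorem tendsto_lintegral_truncatedKernel {F : E × E → ℝ} (hα : 0 < α)
    (hF : AEMeasurable F ((unitBallVolume E).prod (unitBallVolume E)))
    (hF0 : ∀ᵐ z ∂((unitBallVolume E).prod (unitBallVolume E)), 0 ≤ F z) :
    Tendsto (fun k : ℕ => ∫⁻ z, ENNReal.ofReal (truncatedKernel α (1 / ((k : ℝ) + 2)) z.1 z.2 * F z)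
        ∂((unitBallVolume E).prod (unitBallVolume E))) atTop
      (𝓝 (∫⁻ z, ENNReal.ofReal (F z / ‖z.1 - z.2‖ ^ (Module.finrank ℝ E + α))
        ∂((unitBallVolume E).prod (unitBallVolume E)))) := by
  refine lintegral_tendsto_of_tendsto_of_monotone
    (fun k => (measurable_truncatedKernel.aemeasurable.mul hF).ennreal_ofReal) ?_ ?_
  · filter_upwards [hF0] with z hz k l hkl
    refine ENNReal.ofReal_le_ofReal (mul_le_mul_of_nonneg_right ?_ hz)
    exact truncatedKernel_anti (by positivity) (by gcongr)
  · filter_upwards [ae_prod_unitBallVolume_norm_lt_one] with z hz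
    refine tendsto_const_nhds.congr' ?_
    filter_upwards [(tendsto_nhdsWithin_iff.1 tendsto_one_div_add_two).1.eventually
      (eventually_truncatedKernel_eq_inv (y := z.2) hα hz.1)] with k hk
    rw [hk, div_eq_inv_mul]

variable [Nontrivial E]

theorem hardy_lintegral_add_remainder {v : E → ℝ} (hα1 : 1 < α) (hα2 : α < 2) (hρ : ρ < 1)
    (hv : MemLp v 2 (unitBallVolume E)) (hvρ : ∀ x, ρ < ‖x‖ → v x = 0) :
    (∫⁻ z : E × E, ENNReal.ofReal (groundStateIntegrand α v z.1 z.2)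
        ∂((unitBallVolume E).prod (unitBallVolume E))) +
      (ENNReal.ofReal (2 * (halfSphereMoment (Module.finrank ℝ E) α *
          ((eulerBeta ((1 + α) / 2) ((2 - α) / 2) - 2 ^ α) / α) *
          ∫ x, (groundState α x * v x) ^ 2 * (1 - ‖x‖ ^ 2) ^ (-α) ∂(unitBallVolume E))) +
        ENNReal.ofReal (2 * (remainderCoeff E α * ∫ x, v x ^ 2 ∂(unitBallVolume E)))) ≤
    ∫⁻ z : E × E, ENNReal.ofReal ((groundState α z.1 * v z.1 - groundState α z.2 * v z.2) ^ 2 /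
        ‖z.1 - z.2‖ ^ (Module.finrank ℝ E + α))
        ∂((unitBallVolume E).prod (unitBallVolume E)) := by
  have hvm := hv.aestronglyMeasurable.aemeasurable
  have hw := (measurable_groundState (E := E) (α := α)).aemeasurable (μ := unitBallVolume E)
  have hform := tendsto_lintegral_truncatedKernel (α := α) (by linarith)
    ((hw.comp_fst.mul hw.comp_snd).mul ((hvm.comp_fst.sub hvm.comp_snd).pow_const 2))
    (ae_prod_unitBallVolume_norm_lt_one.mono fun z ⟨hx, hy⟩ =>
      mul_nonneg (mul_pos (groundState_pos hx) (groundState_pos hy)).le (sq_nonneg _))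
  have hconst := (tendsto_chordIntegral_lowerBound hα1 hα2).comp tendsto_one_div_add_two
  have hmoment := halfSphereMoment_nonneg (n := Module.finrank ℝ E) (by linarith : 0 ≤ α)
  have hhardy := integral_sq_mul_one_sub_norm_sq_rpow_nonneg (fun x => groundState α x * v x) (-α)
  have hrem := (remainderCoeff_pos (E := E) hα1 hα2).le
  have : 0 ≤ ∫ x, v x ^ 2 ∂(unitBallVolume E) := integral_nonneg fun x => sq_nonneg _
  refine le_of_tendsto' (hform.add ((ENNReal.tendsto_ofReal
    (((hconst.const_mul _).mul_const _).const_mul 2)).add_const _)) fun k => ?_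
  have hε : 0 < 1 / ((k : ℝ) + 2) := by positivity
  have hε2 : 1 / ((k : ℝ) + 2) ≤ 1 / 2 := by
    gcongr
    exact le_add_of_nonneg_left k.cast_nonneg
  refine (le_trans ?_ (truncated_hardy_lintegral hα1 hα2 hε hε2 hρ hv hvρ)).trans ?_
  · have hchord := chordIntegral_one_nonneg hα1 hε (by linarith)
    rw [mul_add, ENNReal.ofReal_add (by positivity) (by positivity)]
    refine add_le_add le_rfl (add_le_add (ENNReal.ofReal_le_ofReal ?_) le_rfl)
    simp only [Function.comp_apply]
    gcongr
    exact le_chordIntegral_one hα1 hα2 hε (by linarith)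
  · refine lintegral_mono fun z => ENNReal.ofReal_le_ofReal ?_
    refine le_trans ?_ (div_eq_inv_mul _ _).ge
    exact mul_le_mul_of_nonneg_right (truncatedKernel_le_inv (x := z.1)) (sq_nonneg _)

end RemoveTruncation

section Interpolation

variable {α d A C G I M N U W q ρ : ℝ}

theorem le_rpow_mul_rpow_of_forall_le (hα : 0 < α) (hd : 0 < d) (hC : 0 ≤ C) (hG : 0 ≤ G)
    (hN : 0 < N) (hρ : ∀ ρ : ℝ, 0 < ρ → ρ ≤ 1 → U ≤ C * (ρ ^ α * G + ρ ^ (α - d) * N))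
    (hUG : U ≤ C * G) :
    U ≤ 2 * C * (G ^ (1 - α / d) * N ^ (α / d)) := by
  have hmean : 0 ≤ C * (G ^ (1 - α / d) * N ^ (α / d)) := by positivity
  rcases hG.eq_or_lt with rfl | hG
  · linarith
  rcases le_total G N with hGN | hNG
  · calc U ≤ C * (G ^ (1 - α / d) * G ^ (α / d)) := by
          rwa [← Real.rpow_add hG, sub_add_cancel, Real.rpow_one]
      _ ≤ C * (G ^ (1 - α / d) * N ^ (α / d)) := by gcongr
      _ ≤ 2 * C * (G ^ (1 - α / d) * N ^ (α / d)) := by linarith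
  · have ht : 0 < N / G := by positivity
    have hfst : ((N / G) ^ (1 / d)) ^ α * G = G ^ (1 - α / d) * N ^ (α / d) := by
      rw [← Real.rpow_mul ht.le, Real.div_rpow hN.le hG.le, Real.rpow_sub hG, Real.rpow_one,
        one_div_mul_eq_div]
      ring
    have hsnd : ((N / G) ^ (1 / d)) ^ (α - d) * N = G ^ (1 - α / d) * N ^ (α / d) := by
      rw [← Real.rpow_mul ht.le, show 1 / d * (α - d) = α / d - 1 by field_simp,
        Real.rpow_sub ht, Real.rpow_one, Real.div_rpow hN.le hG.le, Real.rpow_sub hG, Real.rpow_one]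
      field_simp
    have hopt := hρ ((N / G) ^ (1 / d)) (by positivity)
      (Real.rpow_le_one ht.le ((div_le_one hG).2 hNG) (by positivity))
    rw [hfst, hsnd] at hopt
    linarith

theorem le_rpow_mul_rpow_of_forall_le_add {a b c Y : ℝ} (hα : 0 < α) (hd : 0 < d) (ha : 0 ≤ a)
    (hb : 0 ≤ b) (hc : 0 ≤ c) (hG : 0 ≤ G) (hY : 0 ≤ Y) (hN : 0 < N)
    (hρ : ∀ ρ : ℝ, 0 < ρ → ρ ≤ 1 → U ≤ a * (ρ ^ α * G) + b * (ρ ^ (α - d) * N))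
    (hUG : U ≤ a * G + c * Y) :
    U ≤ 2 * (a + b + c) * ((G + Y) ^ (1 - α / d) * N ^ (α / d)) := by
  have hab : 0 ≤ a + b + c := by positivity
  refine le_rpow_mul_rpow_of_forall_le hα hd hab (by positivity) hN (fun ρ h0 h1 => ?_) ?_
  · calc U ≤ a * (ρ ^ α * G) + b * (ρ ^ (α - d) * N) := hρ ρ h0 h1
      _ ≤ (a + b + c) * (ρ ^ α * (G + Y)) + (a + b + c) * (ρ ^ (α - d) * N) := by
        gcongr <;> linarith
      _ = (a + b + c) * (ρ ^ α * (G + Y) + ρ ^ (α - d) * N) := (mul_add _ _ _).symm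
  · calc U ≤ a * G + c * Y := hUG
      _ ≤ (a + b + c) * G + (a + b + c) * Y := by gcongr <;> linarith
      _ = (a + b + c) * (G + Y) := (mul_add _ _ _).symm

theorem rpow_le_mul_of_le_rpow_mul_rpow (hU : 0 ≤ U) (hM : 0 ≤ M) (hG : 0 ≤ G) (hI : 0 ≤ I)
    (hq : 0 < q) (h : U ≤ M * (G ^ (2 / q) * (I ^ (2 / q)) ^ A)) :
    U ^ (q / 2) ≤ M ^ (q / 2) * I ^ A * G := by
  have hcancel (s : ℝ) : 2 / q * s * (q / 2) = s := by field_simp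
  calc U ^ (q / 2) ≤ (M * (G ^ (2 / q) * (I ^ (2 / q)) ^ A)) ^ (q / 2) := by gcongr
    _ = M ^ (q / 2) * (G ^ (2 / q * 1 * (q / 2)) * I ^ (2 / q * A * (q / 2))) := by
      rw [Real.mul_rpow hM (by positivity), Real.mul_rpow (by positivity) (by positivity),
        ← Real.rpow_mul hG, ← Real.rpow_mul hI, ← Real.rpow_mul hI, mul_one]
    _ = M ^ (q / 2) * I ^ A * G := by rw [hcancel, hcancel, Real.rpow_one]; ring

theorem le_rpow_add_rpow_of_mul_le (hW : 0 < W) (hρ : 0 < ρ) (hd : 0 < d)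
    (h : U * (W * ρ ^ d) ≤ 4 * (2 * ρ) ^ (d + α) * G + 8 * (N * (W * ρ ^ d) ^ (α / d))) :
    U ≤ 4 * 2 ^ (d + α) / W * (ρ ^ α * G) + 8 * W ^ (α / d - 1) * (ρ ^ (α - d) * N) := by
  have hWρ : 0 < W * ρ ^ d := by positivity
  have hfst : 4 * (2 * ρ) ^ (d + α) = 4 * 2 ^ (d + α) / W * ρ ^ α * (W * ρ ^ d) := by
    rw [Real.mul_rpow two_pos.le hρ.le, Real.rpow_add hρ]
    field_simp
  have hsnd : (W * ρ ^ d) ^ (α / d) = W ^ (α / d - 1) * ρ ^ (α - d) * (W * ρ ^ d) := by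
    rw [← div_eq_iff hWρ.ne', ← Real.rpow_sub_one hWρ.ne', Real.mul_rpow hW.le (by positivity),
      ← Real.rpow_mul hρ.le, mul_sub, mul_one, mul_div_cancel₀ α hd.ne']
  rw [hfst, hsnd] at h
  refine le_of_mul_le_mul_right (h.trans_eq ?_) hWρ
  ring

end Interpolation

section SquareIntegral

variable {X : Type*} [MeasurableSpace X] {μ : Measure X} [IsFiniteMeasure μ] {u : X → ℝ} {q : ℝ}

theorem integral_sq_le_integral_rpow_mul_measureReal (hq : 2 < q)
    (hu : MemLp u (ENNReal.ofReal q) μ) :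
    ∫ x, u x ^ 2 ∂μ ≤ (∫ x, |u x| ^ q ∂μ) ^ (2 / q) * μ.real univ ^ (1 - 2 / q) := by
  have hconj : (q / 2).HolderConjugate (1 - 2 / q)⁻¹ := by
    rw [Real.holderConjugate_iff, inv_inv, inv_div]
    exact ⟨by linarith, by ring⟩
  have hsq : MemLp (fun x => u x ^ 2) (ENNReal.ofReal (q / 2)) μ := by
    rw [ENNReal.ofReal_div_of_pos two_pos]
    simpa using hu.norm_rpow_div (ENNReal.ofReal 2)
  have hpow (x : X) : (u x ^ 2) ^ (q / 2) = |u x| ^ q := by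
    rw [← sq_abs, ← Real.rpow_two, ← Real.rpow_mul (abs_nonneg _), mul_div_cancel₀ q two_ne_zero]
  have h := integral_mul_le_Lp_mul_Lq_of_nonneg hconj (.of_forall fun x => sq_nonneg (u x))
    (.of_forall fun _ => zero_le_one) hsq (memLp_const 1)
  simpa [hpow] using h

end SquareIntegral

section InnerBall

variable {E : Type*} [NormedAddCommGroup E] [NormedSpace ℝ E] {α ρ : ℝ} {x y : E}

/-- The ball of radius `ρ / 2` about `(1 - ρ) x`, over which the value at a point `x` of the unit
ball is averaged. Being shifted towards the origin, it stays inside the unit ball however close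
`x` is to the boundary. -/
def innerBall (ρ : ℝ) (x : E) : Set E :=
  ball ((1 - ρ) • x) (ρ / 2)

theorem one_sub_norm_le_of_mem_innerBall (hρ : ρ ≤ 1) (hx : ‖x‖ < 1)
    (hy : y ∈ innerBall ρ x) : 1 - ‖x‖ ≤ 2 * (1 - ‖y‖) := by
  have hdist : ‖y - (1 - ρ) • x‖ < ρ / 2 := mem_ball_iff_norm.1 hy
  have htri := norm_le_norm_sub_add y ((1 - ρ) • x)
  rw [norm_smul, Real.norm_of_nonneg (by linarith)] at htri
  have hρ0 : 0 < ρ := by linarith [norm_nonneg (y - (1 - ρ) • x)]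
  nlinarith [norm_nonneg x, mul_nonneg (sub_nonneg.2 hρ) (sub_nonneg.2 hx.le)]

theorem norm_lt_one_of_mem_innerBall (hρ : ρ ≤ 1) (hx : ‖x‖ < 1) (hy : y ∈ innerBall ρ x) :
    ‖y‖ < 1 := by
  linarith [one_sub_norm_le_of_mem_innerBall hρ hx hy]

theorem innerBall_subset_ball (hρ : ρ ≤ 1) (hx : ‖x‖ < 1) : innerBall ρ x ⊆ ball 0 1 :=
  fun _ hy => mem_ball_zero_iff.2 (norm_lt_one_of_mem_innerBall hρ hx hy)

theorem norm_sub_le_of_mem_innerBall (hx : ‖x‖ < 1) (hy : y ∈ innerBall ρ x) :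
    ‖x - y‖ ≤ 2 * ρ := by
  have hdist : ‖y - (1 - ρ) • x‖ < ρ / 2 := mem_ball_iff_norm.1 hy
  have hρ : 0 < ρ := by linarith [norm_nonneg (y - (1 - ρ) • x)]
  calc ‖x - y‖ = ‖ρ • x - (y - (1 - ρ) • x)‖ := by rw [sub_smul, one_smul]; abel_nf
    _ ≤ ‖ρ • x‖ + ‖y - (1 - ρ) • x‖ := norm_sub_le _ _
    _ ≤ 2 * ρ := by
      rw [norm_smul, Real.norm_of_nonneg hρ.le]
      nlinarith

theorem groundState_le_two_mul_of_mem_innerBall (hα1 : 1 ≤ α) (hα2 : α ≤ 2) (hρ : ρ ≤ 1)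
    (hx : ‖x‖ < 1) (hy : y ∈ innerBall ρ x) : groundState α x ≤ 2 * groundState α y := by
  have hcompare := one_sub_norm_le_of_mem_innerBall hρ hx hy
  have hδy := one_sub_norm_sq_pos (norm_lt_one_of_mem_innerBall hρ hx hy)
  have hp : 0 ≤ (α - 1) / 2 := by linarith
  unfold groundState
  calc (1 - ‖x‖ ^ 2) ^ ((α - 1) / 2) ≤ (4 * (1 - ‖y‖ ^ 2)) ^ ((α - 1) / 2) := by
        refine Real.rpow_le_rpow (one_sub_norm_sq_pos hx).le ?_ hp
        nlinarith [norm_nonneg x, norm_nonneg y]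
    _ = 4 ^ ((α - 1) / 2) * (1 - ‖y‖ ^ 2) ^ ((α - 1) / 2) := Real.mul_rpow (by norm_num) hδy.le
    _ ≤ 4 ^ (1 / 2 : ℝ) * (1 - ‖y‖ ^ 2) ^ ((α - 1) / 2) := by gcongr <;> linarith
    _ = 2 * (1 - ‖y‖ ^ 2) ^ ((α - 1) / 2) := by
        rw [← Real.sqrt_eq_rpow, show (4 : ℝ) = 2 ^ 2 by norm_num, Real.sqrt_sq two_pos.le]

end InnerBall

section WeightedSobolev

variable {E : Type*} [NormedAddCommGroup E] [InnerProductSpace ℝ E] {α ρ : ℝ} {v h : E → ℝ}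
  {x y : E}

theorem groundStateIntegrand_nonneg (hx : ‖x‖ < 1) (hy : ‖y‖ < 1) :
    0 ≤ groundStateIntegrand α v x y := by
  have hw := mul_pos (groundState_pos (α := α) hx) (groundState_pos (α := α) hy)
  unfold groundStateIntegrand
  positivity

theorem sq_groundState_mul_le_of_mem_innerBall (hα1 : 1 ≤ α) (hα2 : α ≤ 2) (hρ : ρ ≤ 1)
    (hx : ‖x‖ < 1) (hy : y ∈ innerBall ρ x) :
    (groundState α x * v x) ^ 2 ≤
      4 * (2 * ρ) ^ (Module.finrank ℝ E + α) * groundStateIntegrand α v x y +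
        2 * groundState α x ^ 2 * v y ^ 2 := by
  have hwx := groundState_pos (α := α) hx
  have hwy := groundState_pos (α := α) (norm_lt_one_of_mem_innerBall hρ hx hy)
  have hwxy := groundState_le_two_mul_of_mem_innerBall hα1 hα2 hρ hx hy
  have hdist := norm_sub_le_of_mem_innerBall hx hy
  have hkernel : groundState α x * groundState α y * (v x - v y) ^ 2 ≤
      (2 * ρ) ^ (Module.finrank ℝ E + α) * groundStateIntegrand α v x y := by
    rcases eq_or_ne x y with rfl | hxy
    · simp [groundStateIntegrand]
    · have hpos := norm_sub_pos_iff.2 hxy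
      rw [groundStateIntegrand, mul_div_left_comm]
      refine le_mul_of_one_le_right (by positivity) ((one_le_div (by positivity)).2 ?_)
      gcongr
  calc (groundState α x * v x) ^ 2 = groundState α x ^ 2 * v x ^ 2 := mul_pow _ _ 2
    _ ≤ groundState α x ^ 2 * (2 * (v x - v y) ^ 2 + 2 * v y ^ 2) := by
      gcongr
      nlinarith [sq_nonneg (v x - 2 * v y)]
    _ = 2 * (groundState α x * groundState α x * (v x - v y) ^ 2) +
        2 * groundState α x ^ 2 * v y ^ 2 := by ring
    _ ≤ 2 * (groundState α x * (2 * groundState α y) * (v x - v y) ^ 2) +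
        2 * groundState α x ^ 2 * v y ^ 2 := by gcongr
    _ ≤ _ := by linarith

variable [FiniteDimensional ℝ E] [MeasurableSpace E] [BorelSpace E]

theorem measureReal_innerBall (hρ : 0 < ρ) :
    volume.real (innerBall ρ x) =
      volume.real (ball (0 : E) (1 / 2)) * ρ ^ (Module.finrank ℝ E : ℝ) := by
  rw [innerBall, div_eq_mul_one_div, Measure.real, Measure.addHaar_ball_mul_of_pos _ _ hρ,
    ENNReal.toReal_mul, ENNReal.toReal_ofReal (by positivity), Real.rpow_natCast, mul_comm,
    Measure.real]

theorem sq_mul_measureReal_innerBall_le (hα1 : 1 ≤ α) (hα2 : α ≤ 2) (hρ : 0 ≤ ρ) (hρ1 : ρ ≤ 1)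
    (hx : ‖x‖ < 1) (hk : Integrable (groundStateIntegrand α v x) (unitBallVolume E))
    (hh : Integrable h (unitBallVolume E))
    (hle : ∀ y ∈ innerBall ρ x, 2 * groundState α x ^ 2 * v y ^ 2 ≤ h y) :
    (groundState α x * v x) ^ 2 * volume.real (innerBall ρ x) ≤
      4 * (2 * ρ) ^ (Module.finrank ℝ E + α) *
          ∫ y, groundStateIntegrand α v x y ∂(unitBallVolume E) +
        ∫ y in innerBall ρ x, h y := by
  have hsub := innerBall_subset_ball hρ1 hx
  have hk' : IntegrableOn (groundStateIntegrand α v x) (innerBall ρ x) :=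
    IntegrableOn.mono_set hk hsub
  have hh' : IntegrableOn h (innerBall ρ x) := IntegrableOn.mono_set hh hsub
  have hk0 : ∫ y in innerBall ρ x, groundStateIntegrand α v x y ≤
      ∫ y, groundStateIntegrand α v x y ∂(unitBallVolume E) := by
    refine setIntegral_mono_set hk ?_ (.of_forall hsub)
    exact ae_unitBallVolume_norm_lt_one.mono fun y hy => groundStateIntegrand_nonneg hx hy
  calc (groundState α x * v x) ^ 2 * volume.real (innerBall ρ x)
      = ∫ _ in innerBall ρ x, (groundState α x * v x) ^ 2 := by
        rw [setIntegral_const, smul_eq_mul, mul_comm]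
    _ ≤ ∫ y in innerBall ρ x, (4 * (2 * ρ) ^ (Module.finrank ℝ E + α) *
          groundStateIntegrand α v x y + h y) :=
        setIntegral_mono_on (integrableOn_const measure_ball_lt_top.ne)
          ((hk'.const_mul _).add hh') measurableSet_ball fun y hy =>
            (sq_groundState_mul_le_of_mem_innerBall hα1 hα2 hρ1 hx hy).trans
              (add_le_add le_rfl (hle y hy))
    _ = 4 * (2 * ρ) ^ (Module.finrank ℝ E + α) *
          (∫ y in innerBall ρ x, groundStateIntegrand α v x y) + ∫ y in innerBall ρ x, h y := by
        rw [integral_add (hk'.const_mul _) hh', integral_const_mul]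
    _ ≤ _ := by gcongr

/-- The critical Sobolev exponent `2^* = 2n/(n - α)`. -/
noncomputable def criticalExponent (n : ℕ) (α : ℝ) : ℝ :=
  2 * n / (n - α)

theorem two_lt_criticalExponent {n : ℕ} (hα : 0 < α) (hαn : α < n) :
    2 < criticalExponent n α := by
  rw [criticalExponent, lt_div_iff₀ (sub_pos.2 hαn)]
  linarith

theorem two_div_criticalExponent {n : ℕ} (hα : 0 < α) (hαn : α < n) :
    2 / criticalExponent n α = 1 - α / n := by
  have hsub := (sub_pos.2 hαn).ne'
  have hn := (hα.trans hαn).ne'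
  rw [criticalExponent]
  field_simp

theorem sq_groundState_mul_le_integral_sq (hα1 : 1 ≤ α) (hα2 : α ≤ 2) (hx : ‖x‖ < 1)
    (hv : MemLp v 2 (unitBallVolume E))
    (hk : Integrable (groundStateIntegrand α v x) (unitBallVolume E)) :
    (groundState α x * v x) ^ 2 * volume.real (ball (0 : E) (1 / 2)) ≤
      4 * 2 ^ (Module.finrank ℝ E + α) *
          ∫ y, groundStateIntegrand α v x y ∂(unitBallVolume E) +
        2 * ∫ y, v y ^ 2 ∂(unitBallVolume E) := by
  have hw : groundState α x ^ 2 ≤ 1 :=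
    pow_le_one₀ (groundState_pos hx).le (groundState_le_one hα1 hx)
  have h := sq_mul_measureReal_innerBall_le hα1 hα2 zero_le_one le_rfl hx hk
    (hv.integrable_sq.const_mul 2) fun y _ => by nlinarith [sq_nonneg (v y)]
  rw [measureReal_innerBall one_pos, Real.one_rpow, mul_one, mul_one, integral_const_mul] at h
  refine h.trans (add_le_add le_rfl (mul_le_mul_of_nonneg_left ?_ two_pos.le))
  exact setIntegral_mono_set hv.integrable_sq (.of_forall fun y => sq_nonneg (v y))
    (.of_forall (innerBall_subset_ball le_rfl hx))

theorem integral_innerBall_sq_le {u : E → ℝ} {q : ℝ} (hq : 2 < q)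
    (hu : MemLp u (ENNReal.ofReal q) (unitBallVolume E)) (hρ : ρ ≤ 1) (hx : ‖x‖ < 1) :
    ∫ y in innerBall ρ x, u y ^ 2 ≤
      (∫ y, |u y| ^ q ∂(unitBallVolume E)) ^ (2 / q) *
        volume.real (innerBall ρ x) ^ (1 - 2 / q) := by
  have hmono : volume.restrict (innerBall ρ x) ≤ unitBallVolume E :=
    Measure.restrict_mono (innerBall_subset_ball hρ hx) le_rfl
  have hfin : IsFiniteMeasure (volume.restrict (innerBall ρ x)) :=
    isFiniteMeasure_restrict.2 measure_ball_lt_top.ne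
  have h := integral_sq_le_integral_rpow_mul_measureReal hq (hu.mono_measure hmono)
  rw [measureReal_restrict_apply_univ] at h
  have hint : Integrable (fun y => |u y| ^ q) (unitBallVolume E) := by
    simpa [ENNReal.toReal_ofReal (show 0 ≤ q by linarith)] using hu.integrable_norm_rpow'
  refine h.trans ?_
  gcongr
  exact .of_forall fun y => by positivity

theorem sq_groundState_mul_le_integral_rpow (hα1 : 1 ≤ α) (hα2 : α ≤ 2)
    (hαd : α < Module.finrank ℝ E) (hρ : 0 < ρ) (hρ1 : ρ ≤ 1) (hx : ‖x‖ < 1)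
    (hu : MemLp (fun y => groundState α y * v y)
      (ENNReal.ofReal (criticalExponent (Module.finrank ℝ E) α)) (unitBallVolume E))
    (hk : Integrable (groundStateIntegrand α v x) (unitBallVolume E)) :
    (groundState α x * v x) ^ 2 *
        (volume.real (ball (0 : E) (1 / 2)) * ρ ^ (Module.finrank ℝ E : ℝ)) ≤
      4 * (2 * ρ) ^ (Module.finrank ℝ E + α) *
          ∫ y, groundStateIntegrand α v x y ∂(unitBallVolume E) +
        8 * ((∫ y, |groundState α y * v y| ^ criticalExponent (Module.finrank ℝ E) α
            ∂(unitBallVolume E)) ^ (2 / criticalExponent (Module.finrank ℝ E) α) *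
          (volume.real (ball (0 : E) (1 / 2)) * ρ ^ (Module.finrank ℝ E : ℝ)) ^
            (α / Module.finrank ℝ E)) := by
  have hα : 0 < α := by linarith
  have hq := two_lt_criticalExponent hα hαd
  have hsq : Integrable (fun y => (groundState α y * v y) ^ 2) (unitBallVolume E) :=
    (hu.mono_exponent (by simpa using ENNReal.ofReal_le_ofReal hq.le)).integrable_sq
  have h := sq_mul_measureReal_innerBall_le hα1 hα2 hρ.le hρ1 hx hk (hsq.const_mul 8) fun y hy => by
    have hwx := groundState_pos (α := α) hx
    have hw := groundState_le_two_mul_of_mem_innerBall hα1 hα2 hρ1 hx hy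
    have hw2 : groundState α x ^ 2 ≤ (2 * groundState α y) ^ 2 := by gcongr
    nlinarith [sq_nonneg (v y)]
  have hholder := integral_innerBall_sq_le hq hu hρ1 hx
  rw [measureReal_innerBall hρ] at h hholder
  rw [two_div_criticalExponent hα hαd, sub_sub_cancel] at hholder
  rw [two_div_criticalExponent hα hαd]
  rw [integral_const_mul] at h
  linarith

end WeightedSobolev

section SobolevInequality

variable {E : Type*} [NormedAddCommGroup E] [InnerProductSpace ℝ E] [FiniteDimensional ℝ E]
  [MeasurableSpace E] [BorelSpace E] {α : ℝ} {v : E → ℝ} {x : E}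

/-- The constant in the pointwise bound preceding the weighted Sobolev inequality; its three terms
come from the ground state form, from Hölder's inequality and from the `L²` norm. -/
noncomputable def sobolevCoeff (E : Type*) [NormedAddCommGroup E] [InnerProductSpace ℝ E]
    [FiniteDimensional ℝ E] [MeasurableSpace E] [BorelSpace E] (α : ℝ) : ℝ :=
  4 * 2 ^ (Module.finrank ℝ E + α) / volume.real (ball (0 : E) (1 / 2)) +
    8 * volume.real (ball (0 : E) (1 / 2)) ^ (α / Module.finrank ℝ E - 1) +
    2 / volume.real (ball (0 : E) (1 / 2))

theorem measureReal_ball_pos {r : ℝ} (hr : 0 < r) : 0 < volume.real (ball x r) :=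
  ENNReal.toReal_pos (measure_ball_pos volume x hr).ne' measure_ball_lt_top.ne

theorem sobolevCoeff_pos : 0 < sobolevCoeff E α := by
  have hW := measureReal_ball_pos (x := (0 : E)) one_half_pos
  unfold sobolevCoeff
  positivity

theorem abs_groundState_mul_rpow_le (hα1 : 1 ≤ α) (hα2 : α ≤ 2) (hαd : α < Module.finrank ℝ E)
    (hx : ‖x‖ < 1) (hv : MemLp v 2 (unitBallVolume E))
    (hu : MemLp (fun y => groundState α y * v y)
      (ENNReal.ofReal (criticalExponent (Module.finrank ℝ E) α)) (unitBallVolume E))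
    (hI : 0 < ∫ y, |groundState α y * v y| ^ criticalExponent (Module.finrank ℝ E) α
      ∂(unitBallVolume E))
    (hk : Integrable (groundStateIntegrand α v x) (unitBallVolume E)) :
    |groundState α x * v x| ^ criticalExponent (Module.finrank ℝ E) α ≤
      (2 * sobolevCoeff E α) ^ (criticalExponent (Module.finrank ℝ E) α / 2) *
        (∫ y, |groundState α y * v y| ^ criticalExponent (Module.finrank ℝ E) α
          ∂(unitBallVolume E)) ^ (α / Module.finrank ℝ E) *
        (∫ y, groundStateIntegrand α v x y ∂(unitBallVolume E) +
          ∫ y, v y ^ 2 ∂(unitBallVolume E)) := by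
  have hα : 0 < α := by linarith
  have hq := two_lt_criticalExponent hα hαd
  have h2q := two_div_criticalExponent hα hαd
  have hW := measureReal_ball_pos (x := (0 : E)) one_half_pos
  have hg : 0 ≤ ∫ y, groundStateIntegrand α v x y ∂(unitBallVolume E) := integral_nonneg_of_ae
    (ae_unitBallVolume_norm_lt_one.mono fun y hy => groundStateIntegrand_nonneg hx hy)
  have hY : 0 ≤ ∫ y, v y ^ 2 ∂(unitBallVolume E) := integral_nonneg fun y => sq_nonneg (v y)
  have hloc (ρ : ℝ) (hρ : 0 < ρ) (hρ1 : ρ ≤ 1) := le_rpow_add_rpow_of_mul_le hW hρ (hα.trans hαd)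
    (sq_groundState_mul_le_integral_rpow hα1 hα2 hαd hρ hρ1 hx hu hk)
  have hglob := sq_groundState_mul_le_integral_sq hα1 hα2 hx hv hk
  rw [← le_div_iff₀ hW, add_div, mul_div_right_comm (4 * _), mul_div_right_comm 2] at hglob
  have hinterp := le_rpow_mul_rpow_of_forall_le_add hα (hα.trans hαd) (by positivity)
    (by positivity) (div_nonneg two_pos.le hW.le) hg hY (Real.rpow_pos_of_pos hI _) hloc hglob
  rw [← h2q] at hinterp
  have h := rpow_le_mul_of_le_rpow_mul_rpow (sq_nonneg _) (by positivity) (add_nonneg hg hY) hI.le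
    (by linarith) hinterp
  rwa [← sq_abs, ← Real.rpow_two, ← Real.rpow_mul (abs_nonneg _), mul_div_cancel₀ _ two_ne_zero]
    at h

theorem aemeasurable_groundStateIntegrand (hv : AEMeasurable v (unitBallVolume E)) (x : E) :
    AEMeasurable (groundStateIntegrand α v x) (unitBallVolume E) :=
  ((measurable_groundState.aemeasurable.const_mul _).mul ((hv.const_sub _).pow_const 2)).div
    (Measurable.aemeasurable (by fun_prop))

theorem aemeasurable_prod_groundStateIntegrand (hv : AEMeasurable v (unitBallVolume E)) :
    AEMeasurable (fun z : E × E => groundStateIntegrand α v z.1 z.2)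
      ((unitBallVolume E).prod (unitBallVolume E)) := by
  have hw := (measurable_groundState (E := E) (α := α)).aemeasurable (μ := unitBallVolume E)
  exact ((hw.comp_fst.mul hw.comp_snd).mul ((hv.comp_fst.sub hv.comp_snd).pow_const 2)).div
    (Measurable.aemeasurable (by fun_prop))

theorem ofReal_abs_groundState_mul_rpow_le (hα1 : 1 ≤ α) (hα2 : α ≤ 2)
    (hαd : α < Module.finrank ℝ E) (hx : ‖x‖ < 1) (hv : MemLp v 2 (unitBallVolume E))
    (hu : MemLp (fun y => groundState α y * v y)
      (ENNReal.ofReal (criticalExponent (Module.finrank ℝ E) α)) (unitBallVolume E))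
    (hI : 0 < ∫ y, |groundState α y * v y| ^ criticalExponent (Module.finrank ℝ E) α
      ∂(unitBallVolume E)) :
    ENNReal.ofReal (|groundState α x * v x| ^ criticalExponent (Module.finrank ℝ E) α) ≤
      ENNReal.ofReal ((2 * sobolevCoeff E α) ^ (criticalExponent (Module.finrank ℝ E) α / 2) *
        (∫ y, |groundState α y * v y| ^ criticalExponent (Module.finrank ℝ E) α
          ∂(unitBallVolume E)) ^ (α / Module.finrank ℝ E)) *
        (∫⁻ y, ENNReal.ofReal (groundStateIntegrand α v x y) ∂(unitBallVolume E) +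
          ENNReal.ofReal (∫ y, v y ^ 2 ∂(unitBallVolume E))) := by
  have hC := sobolevCoeff_pos (E := E) (α := α)
  have hnonneg : 0 ≤ᵐ[unitBallVolume E] groundStateIntegrand α v x :=
    ae_unitBallVolume_norm_lt_one.mono fun y hy => groundStateIntegrand_nonneg hx hy
  by_cases htop : ∫⁻ y, ENNReal.ofReal (groundStateIntegrand α v x y) ∂(unitBallVolume E) = ∞
  · rw [htop, top_add, ENNReal.mul_top (ENNReal.ofReal_pos.2 (by positivity)).ne']
    exact le_top
  · have hk : Integrable (groundStateIntegrand α v x) (unitBallVolume E) :=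
      ⟨(aemeasurable_groundStateIntegrand
          hv.aestronglyMeasurable.aemeasurable x).aestronglyMeasurable,
        (hasFiniteIntegral_iff_ofReal hnonneg).2 (Ne.lt_top htop)⟩
    rw [← ofReal_integral_eq_lintegral_ofReal hk hnonneg,
      ← ENNReal.ofReal_add (integral_nonneg_of_ae hnonneg) (integral_nonneg fun y => sq_nonneg _),
      ← ENNReal.ofReal_mul (by positivity)]
    exact ENNReal.ofReal_le_ofReal (abs_groundState_mul_rpow_le hα1 hα2 hαd hx hv hu hI hk)

/-- The constant of the weighted Sobolev inequality for the ground state form. -/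
noncomputable def weightedSobolevConst (E : Type*) [NormedAddCommGroup E] [InnerProductSpace ℝ E]
    [FiniteDimensional ℝ E] [MeasurableSpace E] [BorelSpace E] (α : ℝ) : ℝ :=
  (2 * sobolevCoeff E α) ^ (criticalExponent (Module.finrank ℝ E) α / 2) *
    (1 + volume.real (ball (0 : E) 1))

theorem weightedSobolevConst_pos : 0 < weightedSobolevConst E α := by
  have hC := sobolevCoeff_pos (E := E) (α := α)
  unfold weightedSobolevConst
  positivity

theorem ofReal_integral_abs_groundState_mul_rpow_le (hα1 : 1 ≤ α) (hα2 : α ≤ 2)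
    (hαd : α < Module.finrank ℝ E) (hv : MemLp v 2 (unitBallVolume E))
    (hu : MemLp (fun y => groundState α y * v y)
      (ENNReal.ofReal (criticalExponent (Module.finrank ℝ E) α)) (unitBallVolume E))
    (hI : 0 < ∫ y, |groundState α y * v y| ^ criticalExponent (Module.finrank ℝ E) α
      ∂(unitBallVolume E)) :
    ENNReal.ofReal (∫ y, |groundState α y * v y| ^ criticalExponent (Module.finrank ℝ E) α
        ∂(unitBallVolume E)) ≤
      ENNReal.ofReal (weightedSobolevConst E α *
        (∫ y, |groundState α y * v y| ^ criticalExponent (Module.finrank ℝ E) α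
          ∂(unitBallVolume E)) ^ (α / Module.finrank ℝ E)) *
        (∫⁻ z : E × E, ENNReal.ofReal (groundStateIntegrand α v z.1 z.2)
            ∂((unitBallVolume E).prod (unitBallVolume E)) +
          ENNReal.ofReal (∫ y, v y ^ 2 ∂(unitBallVolume E))) := by
  have hC := sobolevCoeff_pos (E := E) (α := α)
  have hvm := hv.aestronglyMeasurable.aemeasurable
  rw [ofReal_integral_eq_lintegral_ofReal (not_imp_comm.1 integral_undef hI.ne')
    (.of_forall fun _ => by positivity)]
  refine (lintegral_mono_ae (ae_unitBallVolume_norm_lt_one.mono fun x hx =>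
    ofReal_abs_groundState_mul_rpow_le hα1 hα2 hαd hx hv hu hI)).trans ?_
  have hconst (t : ℝ) : weightedSobolevConst E α * t =
      (2 * sobolevCoeff E α) ^ (criticalExponent (Module.finrank ℝ E) α / 2) * t *
        (1 + volume.real (ball (0 : E) 1)) := mul_right_comm _ _ t
  rw [lintegral_const_mul' _ _ ENNReal.ofReal_ne_top, lintegral_add_right _ measurable_const,
    lintegral_const, Measure.restrict_apply_univ,
    lintegral_prod _ (aemeasurable_prod_groundStateIntegrand hvm).ennreal_ofReal,
    ← ofReal_measureReal measure_ball_lt_top.ne, hconst,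
    ENNReal.ofReal_mul (q := 1 + volume.real _) (by positivity), mul_assoc]
  gcongr
  rw [mul_add, mul_comm _ (ENNReal.ofReal (∫ y, v y ^ 2 ∂_))]
  gcongr
  · exact le_mul_of_one_le_left zero_le (ENNReal.one_le_ofReal.2 (by simp))
  · exact le_add_of_nonneg_left zero_le_one

theorem ofReal_rpow_integral_abs_groundState_mul_rpow_le (hα1 : 1 ≤ α) (hα2 : α ≤ 2)
    (hαd : α < Module.finrank ℝ E) (hv : MemLp v 2 (unitBallVolume E))
    (hu : MemLp (fun y => groundState α y * v y)
      (ENNReal.ofReal (criticalExponent (Module.finrank ℝ E) α)) (unitBallVolume E)) :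
    ENNReal.ofReal ((∫ y, |groundState α y * v y| ^ criticalExponent (Module.finrank ℝ E) α
        ∂(unitBallVolume E)) ^ (2 / criticalExponent (Module.finrank ℝ E) α)) ≤
      ENNReal.ofReal (weightedSobolevConst E α) *
        (∫⁻ z : E × E, ENNReal.ofReal (groundStateIntegrand α v z.1 z.2)
            ∂((unitBallVolume E).prod (unitBallVolume E)) +
          ENNReal.ofReal (∫ y, v y ^ 2 ∂(unitBallVolume E))) := by
  have hα : 0 < α := by linarith
  have hq := two_lt_criticalExponent hα hαd
  have hI0 : 0 ≤ ∫ y, |groundState α y * v y| ^ criticalExponent (Module.finrank ℝ E) α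
      ∂(unitBallVolume E) := integral_nonneg fun _ => by positivity
  rcases hI0.eq_or_lt with hI | hI
  · rw [← hI, Real.zero_rpow (by positivity), ENNReal.ofReal_zero]
    exact zero_le
  have h := ofReal_integral_abs_groundState_mul_rpow_le hα1 hα2 hαd hv hu hI
  rw [mul_comm (weightedSobolevConst E α), ENNReal.ofReal_mul (by positivity), mul_assoc,
    ← ENNReal.div_le_iff' (ENNReal.ofReal_pos.2 (by positivity)).ne' ENNReal.ofReal_ne_top,
    ← ENNReal.ofReal_div_of_pos (by positivity)] at h
  rwa [two_div_criticalExponent hα hαd, Real.rpow_sub hI, Real.rpow_one]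

end SobolevInequality

section UnitBall

variable {E : Type*} [NormedAddCommGroup E] [InnerProductSpace ℝ E] [FiniteDimensional ℝ E]
  [MeasurableSpace E] [BorelSpace E] {α ρ : ℝ} {u : E → ℝ}

theorem memLp_div_groundState {p : ℝ≥0∞} (hα : 1 ≤ α) (hρ : ρ < 1)
    (hu : MemLp u p (unitBallVolume E)) (huρ : ∀ x, ρ < ‖x‖ → u x = 0) :
    MemLp (fun x => u x / groundState α x) p (unitBallVolume E) := by
  refine hu.of_le_mul (c := ((1 - ρ ^ 2) ^ ((α - 1) / 2))⁻¹)
    (hu.aestronglyMeasurable.aemeasurable.div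
      measurable_groundState.aemeasurable).aestronglyMeasurable ?_
  filter_upwards [ae_unitBallVolume_norm_lt_one] with x hx
  rcases le_or_gt ‖x‖ ρ with h | h
  · have hρ0 : 0 < 1 - ρ ^ 2 := by nlinarith [norm_nonneg x]
    have hw : (1 - ρ ^ 2) ^ ((α - 1) / 2) ≤ groundState α x := by
      unfold groundState
      gcongr
    rw [norm_div, Real.norm_of_nonneg (groundState_pos hx).le, div_eq_inv_mul]
    gcongr
  · simp [huρ x h]

variable [Nontrivial E]

theorem hardy_sobolev_mazya_groundState_mul {v : E → ℝ} (hα1 : 1 < α) (hα2 : α < 2)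
    (hαd : α < Module.finrank ℝ E) (hρ : ρ < 1) (hv : MemLp v 2 (unitBallVolume E))
    (hvρ : ∀ x, ρ < ‖x‖ → v x = 0)
    (hwv : MemLp (fun x => groundState α x * v x)
      (ENNReal.ofReal (criticalExponent (Module.finrank ℝ E) α)) (unitBallVolume E)) :
    ENNReal.ofReal (2 * (halfSphereMoment (Module.finrank ℝ E) α *
          ((eulerBeta ((1 + α) / 2) ((2 - α) / 2) - 2 ^ α) / α) *
          ∫ x, (groundState α x * v x) ^ 2 * (1 - ‖x‖ ^ 2) ^ (-α) ∂(unitBallVolume E))) +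
        ENNReal.ofReal (min 1 (2 * remainderCoeff E α) / weightedSobolevConst E α *
          (∫ x, |groundState α x * v x| ^ criticalExponent (Module.finrank ℝ E) α
            ∂(unitBallVolume E)) ^ (2 / criticalExponent (Module.finrank ℝ E) α)) ≤
      ∫⁻ z : E × E, ENNReal.ofReal ((groundState α z.1 * v z.1 - groundState α z.2 * v z.2) ^ 2 /
        ‖z.1 - z.2‖ ^ (Module.finrank ℝ E + α))
        ∂((unitBallVolume E).prod (unitBallVolume E)) := by
  have hC := weightedSobolevConst_pos (E := E) (α := α)
  have hc := remainderCoeff_pos (E := E) hα1 hα2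
  refine le_trans ?_ (hardy_lintegral_add_remainder hα1 hα2 hρ hv hvρ)
  rw [add_left_comm]
  refine add_le_add le_rfl ?_
  set J := ∫⁻ z : E × E, ENNReal.ofReal (groundStateIntegrand α v z.1 z.2)
    ∂((unitBallVolume E).prod (unitBallVolume E))
  set m := min 1 (2 * remainderCoeff E α)
  calc _ ≤ ENNReal.ofReal (m / weightedSobolevConst E α) *
        (ENNReal.ofReal (weightedSobolevConst E α) *
          (J + ENNReal.ofReal (∫ x, v x ^ 2 ∂(unitBallVolume E)))) := by
        rw [ENNReal.ofReal_mul (by positivity)]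
        gcongr
        exact ofReal_rpow_integral_abs_groundState_mul_rpow_le hα1.le hα2.le hαd hv hwv
    _ = ENNReal.ofReal m * J + ENNReal.ofReal (m * ∫ x, v x ^ 2 ∂(unitBallVolume E)) := by
        rw [← mul_assoc, ← ENNReal.ofReal_mul (by positivity), div_mul_cancel₀ _ hC.ne', mul_add,
          ← ENNReal.ofReal_mul (by positivity)]
    _ ≤ J + ENNReal.ofReal (2 * (remainderCoeff E α * ∫ x, v x ^ 2 ∂(unitBallVolume E))) := by
        have hm : ENNReal.ofReal m ≤ 1 := ENNReal.ofReal_le_one.2 (min_le_left _ _)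
        rw [← mul_assoc]
        gcongr
        · exact mul_le_of_le_one_left zero_le hm
        · exact min_le_right _ _

theorem hardy_sobolev_mazya_unitBall (hα1 : 1 < α) (hα2 : α < 2)
    (hαd : α < Module.finrank ℝ E) (hρ : ρ < 1)
    (hu : MemLp u (ENNReal.ofReal (criticalExponent (Module.finrank ℝ E) α)) (unitBallVolume E))
    (huρ : ∀ x, ρ < ‖x‖ → u x = 0) :
    ENNReal.ofReal (2 * (halfSphereMoment (Module.finrank ℝ E) α *
          ((eulerBeta ((1 + α) / 2) ((2 - α) / 2) - 2 ^ α) / α) *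
          ∫ x, u x ^ 2 * (1 - ‖x‖ ^ 2) ^ (-α) ∂(unitBallVolume E))) +
        ENNReal.ofReal (min 1 (2 * remainderCoeff E α) / weightedSobolevConst E α *
          (∫ x, |u x| ^ criticalExponent (Module.finrank ℝ E) α
            ∂(unitBallVolume E)) ^ (2 / criticalExponent (Module.finrank ℝ E) α)) ≤
      ∫⁻ x, ∫⁻ y, ENNReal.ofReal ((u x - u y) ^ 2 / ‖x - y‖ ^ (Module.finrank ℝ E + α))
        ∂(unitBallVolume E) ∂(unitBallVolume E) := by
  have hu2 : MemLp u 2 (unitBallVolume E) := hu.mono_exponent <| by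
    rw [← ENNReal.ofReal_ofNat]
    exact ENNReal.ofReal_le_ofReal (two_lt_criticalExponent (by linarith) hαd).le
  have hmul {x : E} (hx : ‖x‖ < 1) : groundState α x * (u x / groundState α x) = u x :=
    mul_div_cancel₀ _ (groundState_pos hx).ne'
  have hae : (fun x => groundState α x * (u x / groundState α x)) =ᵐ[unitBallVolume E] u :=
    ae_unitBallVolume_norm_lt_one.mono fun x => hmul
  have h := hardy_sobolev_mazya_groundState_mul hα1 hα2 hαd hρ
    (memLp_div_groundState hα1.le hρ hu2 huρ) (fun x hx => by simp [huρ x hx])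
    ((memLp_congr_ae hae).2 hu)
  have hum := hu.aestronglyMeasurable.aemeasurable
  have hform : AEMeasurable (fun z : E × E => ENNReal.ofReal ((u z.1 - u z.2) ^ 2 /
      ‖z.1 - z.2‖ ^ (Module.finrank ℝ E + α))) ((unitBallVolume E).prod (unitBallVolume E)) :=
    (((hum.comp_fst.sub hum.comp_snd).pow_const 2).div
      (Measurable.aemeasurable (by fun_prop))).ennreal_ofReal
  rw [← lintegral_prod _ hform]
  convert h using 1
  · congr! 4
    · exact integral_congr_ae (hae.mono fun x hx => by simp only [hx])
    · exact integral_congr_ae (hae.mono fun x hx => by simp only [hx])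
  · refine lintegral_congr_ae (ae_prod_unitBallVolume_norm_lt_one.mono fun z hz => ?_)
    simp only [hmul hz.1, hmul hz.2]

end UnitBall

section Scaling

theorem preimage_smul_ball_zero {E : Type*} [NormedAddCommGroup E] [NormedSpace ℝ E] {r : ℝ}
    (hr : 0 < r) : (r • ·) ⁻¹' ball (0 : E) r = ball 0 1 := by
  ext x
  rw [mem_preimage, mem_ball_zero_iff, mem_ball_zero_iff, norm_smul, Real.norm_of_nonneg hr.le,
    mul_lt_iff_lt_one_right hr]

section AddHaar

variable {E : Type*} [NormedAddCommGroup E] [NormedSpace ℝ E] [FiniteDimensional ℝ E]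
  [MeasurableSpace E] [BorelSpace E] {μ : Measure E} [μ.IsAddHaarMeasure] {r : ℝ}

theorem memLp_comp_smul {f : E → ℝ} {p : ℝ≥0∞} (hr : r ≠ 0) (hf : MemLp f p μ) :
    MemLp (fun x => f (r • x)) p μ :=
  (measurableEmbedding_const_smul₀ hr).memLp_map_measure_iff.1 <| by
    rw [Measure.map_addHaar_smul μ hr]
    exact hf.smul_measure ENNReal.ofReal_ne_top

variable (μ)

theorem setLIntegral_ball_eq_mul_setLIntegral_comp_smul (hr : 0 < r) (f : E → ℝ≥0∞) :
    ∫⁻ x in ball 0 r, f x ∂μ =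
      ENNReal.ofReal (r ^ Module.finrank ℝ E) * ∫⁻ x in ball 0 1, f (r • x) ∂μ := by
  have hemb := measurableEmbedding_const_smul₀ (α := E) hr.ne'
  have hrd : 0 < r ^ Module.finrank ℝ E := by positivity
  rw [← preimage_smul_ball_zero hr, ← hemb.lintegral_map f, ← hemb.restrict_map,
    Measure.map_addHaar_smul μ hr.ne', Measure.restrict_smul, lintegral_smul_measure, smul_eq_mul,
    ← mul_assoc, ← ENNReal.ofReal_mul hrd.le, abs_of_pos (inv_pos.2 hrd),
    mul_inv_cancel₀ hrd.ne', ENNReal.ofReal_one, one_mul]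

theorem setIntegral_ball_eq_mul_setIntegral_comp_smul (hr : 0 < r) (f : E → ℝ) :
    ∫ x in ball 0 r, f x ∂μ = r ^ Module.finrank ℝ E * ∫ x in ball 0 1, f (r • x) ∂μ := by
  rw [Measure.setIntegral_comp_smul_of_pos μ f _ hr, smul_unitBall_of_pos hr, smul_eq_mul,
    mul_inv_cancel_left₀ (by positivity)]

end AddHaar

theorem tsupport_comp_smul_subset_ball {E : Type*} [NormedAddCommGroup E] [NormedSpace ℝ E]
    {r : ℝ} {u : E → ℝ} (hr : 0 < r) (hu : tsupport u ⊆ ball 0 r) :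
    tsupport (fun x => u (r • x)) ⊆ ball 0 1 :=
  (tsupport_comp_subset_preimage u (continuous_const_smul r)).trans <|
    (preimage_mono hu).trans (preimage_smul_ball_zero hr).subset

variable {n : ℕ} {α r : ℝ}

theorem energy_ball_eq_mul_energy_comp_smul (hr : 0 < r) (u : EuclideanSpace ℝ (Fin n) → ℝ) :
    energy n α (ball 0 r) u =
      ENNReal.ofReal (r ^ ((n : ℝ) - α)) * energy n α (ball 0 1) fun x => u (r • x) := by
  have hkernel (x y : EuclideanSpace ℝ (Fin n)) :
      ENNReal.ofReal ((u (r • x) - u (r • y)) ^ 2 / ‖r • x - r • y‖ ^ ((n : ℝ) + α)) =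
        ENNReal.ofReal (r ^ (-((n : ℝ) + α))) *
          ENNReal.ofReal ((u (r • x) - u (r • y)) ^ 2 / ‖x - y‖ ^ ((n : ℝ) + α)) := by
    rw [← ENNReal.ofReal_mul (by positivity), ← smul_sub, norm_smul, Real.norm_of_nonneg hr.le,
      Real.mul_rpow hr.le (norm_nonneg _), Real.rpow_neg hr.le,
      div_mul_eq_div_div_swap, div_eq_inv_mul _ (r ^ _)]
  have hpow : r ^ ((n : ℝ) - α) = r ^ n * (r ^ n * r ^ (-((n : ℝ) + α))) := by
    rw [← Real.rpow_natCast, ← Real.rpow_add hr, ← Real.rpow_add hr]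
    congr 1
    ring
  simp only [energy, setLIntegral_ball_eq_mul_setLIntegral_comp_smul volume hr, hkernel,
    lintegral_const_mul' _ _ ENNReal.ofReal_ne_top, finrank_euclideanSpace_fin]
  rw [hpow, ENNReal.ofReal_mul (by positivity), ENNReal.ofReal_mul (by positivity)]
  ring

theorem integral_hardy_ball_eq_mul_integral_comp_smul (hr : 0 < r)
    (u : EuclideanSpace ℝ (Fin n) → ℝ) :
    ∫ x in ball 0 r, u x ^ 2 * (r ^ α * (r ^ 2 - ‖x‖ ^ 2) ^ (-α)) =
      r ^ ((n : ℝ) - α) * ∫ x in ball 0 1, u (r • x) ^ 2 * (1 - ‖x‖ ^ 2) ^ (-α) := by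
  rw [setIntegral_ball_eq_mul_setIntegral_comp_smul volume hr, finrank_euclideanSpace_fin,
    sub_eq_add_neg, Real.rpow_add hr, Real.rpow_natCast, mul_assoc,
    ← integral_const_mul (r ^ (-α))]
  congr 1
  refine setIntegral_congr_fun measurableSet_ball fun x hx => ?_
  have hx0 := one_sub_norm_sq_pos (mem_ball_zero_iff.1 hx)
  have hsq : r ^ 2 - ‖r • x‖ ^ 2 = r ^ 2 * (1 - ‖x‖ ^ 2) := by
    rw [norm_smul, Real.norm_of_nonneg hr.le]
    ring
  have hpow : r ^ (-α) = r ^ α * (r ^ 2) ^ (-α) := by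
    rw [← Real.rpow_two, ← Real.rpow_mul hr.le, ← Real.rpow_add hr]
    congr 1
    ring
  simp only [hsq, hpow, Real.mul_rpow (sq_nonneg r) hx0.le]
  ring

theorem rpow_integral_ball_eq_mul_integral_comp_smul (hα : 0 < α) (hαn : α < n) (hr : 0 < r)
    (u : EuclideanSpace ℝ (Fin n) → ℝ) :
    (∫ x in ball 0 r, |u x| ^ criticalExponent n α) ^ (2 / criticalExponent n α) =
      r ^ ((n : ℝ) - α) *
        (∫ x in ball 0 1, |u (r • x)| ^ criticalExponent n α) ^ (2 / criticalExponent n α) := by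
  rw [setIntegral_ball_eq_mul_setIntegral_comp_smul volume hr, finrank_euclideanSpace_fin,
    Real.mul_rpow (by positivity) (integral_nonneg fun _ => by positivity),
    ← Real.rpow_natCast r n, ← Real.rpow_mul hr.le]
  have hn : (n : ℝ) ≠ 0 := (hα.trans hαn).ne'
  congr 2
  rw [two_div_criticalExponent hα hαn]
  field_simp

end Scaling

theorem two_pow_mul_kappa (n : ℕ) {α : ℝ} :
    2 ^ α * kappa n α =
      halfSphereMoment n α * ((eulerBeta ((1 + α) / 2) ((2 - α) / 2) - 2 ^ α) / α) := by
  rw [kappa, halfSphereMoment, mul_left_comm, ← div_div, mul_div_cancel₀ _ (by positivity)]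

theorem exists_hardy_sobolev_mazya_unitBall {n : ℕ} (hn : 2 ≤ n) {α : ℝ} (hα1 : 1 < α)
    (hα2 : α < 2) :
    ∃ c : ℝ, 0 < c ∧ ∀ u : EuclideanSpace ℝ (Fin n) → ℝ,
      MemLp u (ENNReal.ofReal (criticalExponent n α)) → tsupport u ⊆ ball 0 1 →
      ENNReal.ofReal (2 ^ α * kappa n α * ∫ x in ball 0 1, u x ^ 2 * (1 - ‖x‖ ^ 2) ^ (-α)) +
          ENNReal.ofReal (c * (∫ x in ball 0 1, |u x| ^ criticalExponent n α) ^
            (2 / criticalExponent n α)) ≤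
        energy n α (ball 0 1) u := by
  have : Nontrivial (EuclideanSpace ℝ (Fin n)) :=
    Module.nontrivial_of_finrank_pos (R := ℝ) (by rw [finrank_euclideanSpace_fin]; lia)
  have hC := weightedSobolevConst_pos (E := EuclideanSpace ℝ (Fin n)) (α := α)
  have hc := remainderCoeff_pos (E := EuclideanSpace ℝ (Fin n)) hα1 hα2
  have hαn : α < n := hα2.trans_le (by exact_mod_cast hn)
  refine ⟨min 1 (2 * remainderCoeff _ α) / weightedSobolevConst (EuclideanSpace ℝ (Fin n)) α / 2,
    by positivity, fun u hu hsupp => ?_⟩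
  obtain ⟨ρ, hρ, hsub⟩ := exists_pos_lt_subset_ball one_pos (isClosed_tsupport u) hsupp
  have huρ (x) (hx : ρ < ‖x‖) : u x = 0 := image_eq_zero_of_notMem_tsupport fun hxu =>
    hx.not_gt (mem_ball_zero_iff.1 (hsub hxu))
  have h := hardy_sobolev_mazya_unitBall hα1 hα2 (by rwa [finrank_euclideanSpace_fin]) hρ.2
    (by rw [finrank_euclideanSpace_fin]; exact hu.restrict _) huρ
  have hhalf (t : ℝ) : ENNReal.ofReal t = 1 / 2 * ENNReal.ofReal (2 * t) := by
    rw [ENNReal.ofReal_mul zero_le_two, ← mul_assoc, ENNReal.ofReal_ofNat, one_div,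
      ENNReal.inv_mul_cancel two_ne_zero ENNReal.ofNat_ne_top, one_mul]
  rw [two_pow_mul_kappa, hhalf, hhalf (_ / 2 * _), ← mul_add, ← mul_assoc 2 (_ / 2),
    mul_div_cancel₀ _ two_ne_zero, energy]
  simp only [finrank_euclideanSpace_fin] at h
  exact mul_le_mul_right h _

theorem fractional_hardy_sobolev_mazya_ball_general (n : ℕ) (hn : 2 ≤ n) (α : ℝ)
    (hα1 : 1 < α) (hα2 : α < 2) :
    ∃ c : ℝ, 0 < c ∧ ∀ r : ℝ, 0 < r → ∀ u : EuclideanSpace ℝ (Fin n) → ℝ,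
      MemLp u (ENNReal.ofReal ((2 * n) / ((n : ℝ) - α))) → tsupport u ⊆ ball 0 r →
      energy n α (ball 0 r) u ≥
        ENNReal.ofReal ((2 : ℝ) ^ α * kappa n α *
          ∫ x in ball (0 : EuclideanSpace ℝ (Fin n)) r,
            (u x) ^ 2 * (r ^ α * (r ^ 2 - ‖x‖ ^ 2) ^ (-α))) +
        ENNReal.ofReal (c *
          (∫ x in ball (0 : EuclideanSpace ℝ (Fin n)) r,
            |u x| ^ ((2 * n) / ((n : ℝ) - α))) ^ (2 / ((2 * n) / ((n : ℝ) - α)))) := by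
  have hαn : α < n := hα2.trans_le (by exact_mod_cast hn)
  obtain ⟨c, hc, hunit⟩ := exists_hardy_sobolev_mazya_unitBall hn hα1 hα2
  refine ⟨c, hc, fun r hr u hu hsupp => ?_⟩
  have hrn : 0 ≤ r ^ ((n : ℝ) - α) := by positivity
  have h := hunit _ (memLp_comp_smul hr.ne' hu) (tsupport_comp_smul_subset_ball hr hsupp)
  rw [ge_iff_le, ← criticalExponent, energy_ball_eq_mul_energy_comp_smul hr,
    integral_hardy_ball_eq_mul_integral_comp_smul hr,
    rpow_integral_ball_eq_mul_integral_comp_smul (by linarith) hαn hr, mul_left_comm,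
    mul_left_comm c, ENNReal.ofReal_mul hrn, ENNReal.ofReal_mul hrn, ← mul_add]
  exact mul_le_mul_right h _

/-- Fractional Hardy–Sobolev–Maz'ya inequality for balls. -/
theorem fractional_hardy_sobolev_mazya_ball (n : ℕ) (hn : 2 ≤ n) (α : ℝ)
    (hα1 : 1 < α) (hα2 : α < 2) :
    ∃ c : ℝ, 0 < c ∧ ∀ r : ℝ, 0 < r → ∀ u : EuclideanSpace ℝ (Fin n) → ℝ,
      Continuous u → HasCompactSupport u → tsupport u ⊆ ball 0 r →
      energy n α (ball 0 r) u ≥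
        ENNReal.ofReal ((2 : ℝ) ^ α * kappa n α *
          ∫ x in ball (0 : EuclideanSpace ℝ (Fin n)) r,
            (u x) ^ 2 * (r ^ α * (r ^ 2 - ‖x‖ ^ 2) ^ (-α))) +
        ENNReal.ofReal (c *
          (∫ x in ball (0 : EuclideanSpace ℝ (Fin n)) r,
            |u x| ^ ((2 * n) / ((n : ℝ) - α))) ^ (2 / ((2 * n) / ((n : ℝ) - α)))) := by
  obtain ⟨c, hc, h⟩ := fractional_hardy_sobolev_mazya_ball_general n hn α hα1 hα2
  exact ⟨c, hc, fun r hr u hu hcs => h r hr u (hu.memLp_of_hasCompactSupport hcs)⟩
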